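/- In the imitative monomer-dimer mean-field model with parameters J ≥ 0 and h ∈ ℝ: (i) if (J,h) ∉ Γ ∪ {(J_c,h_c)}, then for 0 ≤ z ≤ n^{1/6}, P(n^{1/2}(m(σ)−m₀) ≥ z)/P(Z₀ > z) = 1 + O(1)·n^{−1/2}(1+z³), where Z₀ is a centered Gaussian random variable with variance λ₀ = −(H''(m₀))^{−1} − (2J)^{−1} and m₀ is the unique maximizer of H; (ii) if (J,h) = (J_c,h_c), then for 0 ≤ z ≤ n^{1/20}, P(n^{1/4}(m(σ)−m_c) ≥ z)/P(Y ≥ z) = 1 + O(1)·n^{−1/4}(1+z⁵), where m_c = 2−√2 and Y has density p(y) = c₁·e^{−λ_c y⁴/24} with λ_c = −H^{(4)}(m_c) > 0 and normalizing constant c₁. -/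

import Mathlib

open MeasureTheory Real

/-- `g(x) = ½(√(e^{4x} + 4e^{2x}) − e^{2x})`. -/
noncomputable def mdg (x : ℝ) : ℝ :=
  (Real.sqrt (Real.exp (4 * x) + 4 * Real.exp (2 * x)) - Real.exp (2 * x)) / 2

/-- `τ(x) = (2x − 1)J + h`. -/
def mdtau (J h x : ℝ) : ℝ := (2 * x - 1) * J + h

/-- `H(x) = −Jx² − ½(1 − g(τ(x)) + log(1 − g(τ(x))))`. -/
noncomputable def mdH (J h x : ℝ) : ℝ :=
  -J * x ^ 2 - (1 - mdg (mdtau J h x) + Real.log (1 - mdg (mdtau J h x))) / 2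

/-- `J_c = 1/(4(3 − 2√2))`. -/
noncomputable def Jc : ℝ := 1 / (4 * (3 - 2 * Real.sqrt 2))

/-- `h_c = ½ log(2√2 − 2) − ¼`. -/
noncomputable def hcrit : ℝ := Real.log (2 * Real.sqrt 2 - 2) / 2 - 1 / 4

/-- The number of dimer configurations (perfect matchings) of the complete graph
on `j` vertices: `j!/(2^{j/2} (j/2)!)` for even `j` and `0` for odd `j`. -/
def pmCount (j : ℕ) : ℕ :=
  if Even j then j.factorial / (2 ^ (j / 2) * (j / 2).factorial) else 0

/-- The number of monomers of a configuration `σ ∈ {0,1}ⁿ`. -/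
def monomerNum {n : ℕ} (σ : Fin n → Bool) : ℕ :=
  (Finset.univ.filter fun i => σ i = true).card

/-- The monomer density `m(σ)`. -/
noncomputable def mdens {n : ℕ} (σ : Fin n → Bool) : ℝ := (monomerNum σ : ℝ) / n

/-- The Gibbs weight `D(σ) e^{−T(σ)}` with
`−T(σ) = n(J m(σ)² + b m(σ))`, `b = (log n)/2 + h − J`. -/
noncomputable def mdweight (J h : ℝ) (n : ℕ) (σ : Fin n → Bool) : ℝ :=
  (pmCount (n - monomerNum σ) : ℝ) *
    Real.exp (n * (J * mdens σ ^ 2 + (Real.log n / 2 + h - J) * mdens σ))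

open scoped Classical in
/-- The probability of an event `A` under the imitative monomer–dimer Gibbs measure. -/
noncomputable def mdProb (J h : ℝ) (n : ℕ) (A : Set (Fin n → Bool)) : ℝ :=
  (∑ σ ∈ Finset.univ.filter (fun σ => σ ∈ A), mdweight J h n σ) /
    ∑ σ : Fin n → Bool, mdweight J h n σ

/-!
The Gibbs weight of a configuration depends only on its number `d` of dimers, so the law of the
monomer density is an explicit distribution on the points `(n - 2d) / n`. By Stirling's formula
the weight at density `m` is `exp (n F(m))` up to a bounded factor varying smoothly with `m`, where
`F` is the free energy. Substituting the equilibrium relation `2 τ(x) = log (u² / (1 - u))`,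
`u = g(τ(x))`, shows that `H - F` is a relative entropy; hence `F ≤ H`, with equality exactly at
the fixed points of `g ∘ τ`, and `F` inherits the maximizer of `H`. Its Taylor expansion there
starts with `-κ (m - m₀)ᵃ`, where `a = 2` away from the critical point and `a = 4` at it.

Write `n = Z ^ (a (a + 1))`. In the variable `y = n ^ (1 / a) (m - m₀)` the weights are
`exp (-κ yᵃ)` with relative error of order `(1 + |y|) ^ (a + 1) / Z ^ (a + 1)` on the window
`|y| ≤ 2 Z`, and negligible outside it. Summing cell by cell compares the probability of `y ≥ z`
with the normalized tail `∫_z^∞ exp (-κ yᵃ) dy`. The relative error survives since the density at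
`z` is at most of order `(1 + z) ^ (a - 1)` times the tail, and since `z ≤ Z` keeps the tail above
the weight outside the window.
-/

/-! ### Reduction to the number of dimers -/

/-- The monomer density `(n - 2d) / n` of a configuration with `d` dimers on `n` sites. -/
noncomputable def monomerDensity (n d : ℕ) : ℝ := ((n : ℝ) - 2 * d) / n

/-- The total Gibbs weight of all dimer configurations with exactly `d` dimers on `n` sites: the
number `n! / ((n - 2d)! 2ᵈ d!)` of such configurations times their common Boltzmann factor. -/
noncomputable def dimerWeight (J h : ℝ) (n d : ℕ) : ℝ :=
  n.factorial / ((n - 2 * d).factorial * (2 ^ d * d.factorial)) *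
    exp (n * (J * monomerDensity n d ^ 2 + (log n / 2 + h - J) * monomerDensity n d))

lemma dimerWeight_pos (J h : ℝ) (n d : ℕ) : 0 < dimerWeight J h n d := by
  unfold dimerWeight
  positivity

lemma sum_apply_monomerNum {M : Type*} [AddCommMonoid M] (n : ℕ) (f : ℕ → M) :
    ∑ σ : Fin n → Bool, f (monomerNum σ) = ∑ k ∈ Finset.range (n + 1), n.choose k • f k := by
  have sum_eq_sum_finset : ∑ σ : Fin n → Bool, f (monomerNum σ) = ∑ s : Finset (Fin n), f s.card :=
    Fintype.sum_equiv
      { toFun := fun σ => Finset.univ.filter fun i => σ i = true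
        invFun := fun s i => decide (i ∈ s)
        left_inv := fun σ => by ext i; simp
        right_inv := fun s => by ext i; simp } _ _ fun _ => rfl
  have sum_finset := Finset.sum_powerset_apply_card f (x := (Finset.univ : Finset (Fin n)))
  rw [Finset.powerset_univ, Finset.card_univ, Fintype.card_fin] at sum_finset
  exact sum_eq_sum_finset.trans sum_finset

lemma pmCount_two_mul (d : ℕ) :
    (pmCount (2 * d) : ℝ) = (2 * d).factorial / (2 ^ d * d.factorial) := by
  have hdvd : 2 ^ d * d.factorial ∣ (2 * d).factorial := by
    rcases d with _ | d
    · simp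
    · rw [← Nat.doubleFactorial_two_mul]
      exact ⟨_, Nat.factorial_eq_mul_doubleFactorial (2 * d + 1)⟩
  rw [pmCount, if_pos (even_two_mul d), Nat.mul_div_cancel_left d two_pos,
    Nat.cast_div hdvd (by positivity)]
  push_cast
  rfl

lemma pmCount_of_not_even {j : ℕ} (hj : ¬Even j) : pmCount j = 0 := if_neg hj

lemma choose_mul_pmCount {n d : ℕ} (hd : 2 * d ≤ n) :
    (n.choose (n - 2 * d) : ℝ) * pmCount (2 * d) =
      n.factorial / ((n - 2 * d).factorial * (2 ^ d * d.factorial)) := by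
  rw [pmCount_two_mul, Nat.choose_symm hd, Nat.cast_choose ℝ hd]
  have := Nat.factorial_ne_zero (2 * d)
  field_simp

lemma sum_range_choose_mul_pmCount_mul (n : ℕ) (f : ℕ → ℝ) :
    ∑ k ∈ Finset.range (n + 1), (n.choose k : ℝ) * (pmCount (n - k) * f k) =
      ∑ d ∈ Finset.range (n / 2 + 1),
        n.factorial / ((n - 2 * d).factorial * (2 ^ d * d.factorial)) * f (n - 2 * d) := by
  symm
  refine Finset.sum_of_injOn (fun d => n - 2 * d) ?_ ?_ ?_ ?_
  · intro d hd e he hde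
    simp only [Finset.coe_range, Set.mem_Iio] at hd he hde
    omega
  · intro d hd
    simp only [Finset.coe_range, Set.mem_Iio] at hd ⊢
    omega
  · intro k hk hk'
    have hodd : ¬Even (n - k) := by
      rintro ⟨d, hd⟩
      rw [Finset.mem_range] at hk
      refine hk' ⟨d, ?_, ?_⟩
      · simp only [Finset.coe_range, Set.mem_Iio]
        omega
      · dsimp only
        omega
    simp [pmCount_of_not_even hodd]
  · intro d hd
    rw [Finset.mem_range] at hd
    have hle : 2 * d ≤ n := by omega
    rw [Nat.sub_sub_self hle, ← mul_assoc (n.choose _ : ℝ), choose_mul_pmCount hle]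

lemma cast_sub_two_mul_div {n d : ℕ} (hd : 2 * d ≤ n) :
    ((n - 2 * d : ℕ) : ℝ) / n = monomerDensity n d := by
  rw [monomerDensity, Nat.cast_sub hd]
  push_cast
  rfl

lemma sum_mdweight_filter (J h : ℝ) (n : ℕ) (P : ℝ → Prop) [DecidablePred P] :
    ∑ σ : Fin n → Bool with P (mdens σ), mdweight J h n σ =
      ∑ d ∈ Finset.range (n / 2 + 1) with P (monomerDensity n d), dimerWeight J h n d := by
  rw [Finset.sum_filter, Finset.sum_filter]
  set boltzmann : ℕ → ℝ := fun k =>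
    if P (k / n) then exp (n * (J * (k / n) ^ 2 + (log n / 2 + h - J) * (k / n))) else 0
    with boltzmann_def
  have hconfig (σ : Fin n → Bool) : (if P (mdens σ) then mdweight J h n σ else 0) =
      pmCount (n - monomerNum σ) * boltzmann (monomerNum σ) := by
    simp only [boltzmann_def, mul_ite, mul_zero]
    rfl
  rw [Finset.sum_congr rfl fun σ _ => hconfig σ,
    sum_apply_monomerNum n fun k => (pmCount (n - k) : ℝ) * boltzmann k]
  simp only [nsmul_eq_mul]
  rw [sum_range_choose_mul_pmCount_mul]
  refine Finset.sum_congr rfl fun d hd => ?_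
  have hle : 2 * d ≤ n := by
    rw [Finset.mem_range] at hd
    omega
  simp only [boltzmann_def, cast_sub_two_mul_div hle, mul_ite, mul_zero, dimerWeight]

lemma mdProb_eq_div (J h : ℝ) (n : ℕ) (P : ℝ → Prop) [DecidablePred P] :
    mdProb J h n {σ | P (mdens σ)} =
      (∑ d ∈ Finset.range (n / 2 + 1) with P (monomerDensity n d), dimerWeight J h n d) /
        ∑ d ∈ Finset.range (n / 2 + 1), dimerWeight J h n d := by
  have htotal := sum_mdweight_filter J h n fun _ => True
  simp only [Finset.filter_true] at htotal
  rw [mdProb, htotal, ← sum_mdweight_filter]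
  congr!

lemma mdweight_nonneg (J h : ℝ) {n : ℕ} (σ : Fin n → Bool) : 0 ≤ mdweight J h n σ := by
  unfold mdweight
  positivity

lemma mdProb_nonneg (J h : ℝ) {n : ℕ} (A : Set (Fin n → Bool)) : 0 ≤ mdProb J h n A :=
  div_nonneg (Finset.sum_nonneg fun σ _ => mdweight_nonneg J h σ)
    (Finset.sum_nonneg fun σ _ => mdweight_nonneg J h σ)

lemma mdProb_le_one (J h : ℝ) {n : ℕ} (A : Set (Fin n → Bool)) : mdProb J h n A ≤ 1 :=
  div_le_one_of_le₀
    (Finset.sum_le_univ_sum_of_nonneg fun σ => mdweight_nonneg J h σ)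
    (Finset.sum_nonneg fun σ _ => mdweight_nonneg J h σ)

/-! ### Stirling asymptotics of the weights -/

/-- The error of the leading-order Stirling approximation `k log k - k` to `log k!`. -/
noncomputable def stirlingRemainder (k : ℕ) : ℝ := log k.factorial - (k * log k - k)

lemma log_stirlingSeq_le {k : ℕ} (hk : k ≠ 0) :
    log (Stirling.stirlingSeq k) ≤ log √π + 1 / (12 * k) := by
  obtain ⟨k, rfl⟩ := Nat.exists_eq_succ_of_ne_zero hk
  set u : ℕ → ℝ := fun j => log (Stirling.stirlingSeq (j + 1)) - 1 / (12 * ((j + 1 : ℕ) : ℝ))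
    with hu
  have hmono : Monotone u := by
    refine monotone_nat_of_le_succ fun j => ?_
    have hstep := Stirling.log_stirlingSeq_sdiff_le (j + 1)
    have htelescope : 1 / (12 * ((j + 1 : ℕ) : ℝ) * ((j + 1 : ℕ) + 1)) =
        1 / (12 * ((j + 1 : ℕ) : ℝ)) - 1 / (12 * ((j + 1 + 1 : ℕ) : ℝ)) := by
      push_cast
      field_simp
      ring
    simp only [hu]
    linarith
  have hlim : Filter.Tendsto u Filter.atTop (nhds (log √π - 0)) := by
    refine ((Stirling.tendsto_stirlingSeq_sqrt_pi.log (by positivity)).comp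
      (Filter.tendsto_add_atTop_nat 1)).sub ?_
    refine tendsto_const_nhds.div_atTop (Filter.Tendsto.const_mul_atTop (by norm_num) ?_)
    exact tendsto_natCast_atTop_atTop.comp (Filter.tendsto_add_atTop_nat 1)
  have hle : u k ≤ log √π - 0 := hmono.ge_of_tendsto hlim k
  simp only [hu] at hle
  linarith

lemma stirlingRemainder_eq {k : ℕ} (hk : k ≠ 0) :
    stirlingRemainder k = log (2 * k) / 2 + log (Stirling.stirlingSeq k) := by
  rw [stirlingRemainder, Stirling.log_stirlingSeq_formula,
    log_div (Nat.cast_ne_zero.2 hk) (exp_ne_zero 1), log_exp]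
  ring

lemma abs_stirlingRemainder_sub_le {k : ℕ} (hk : k ≠ 0) :
    |stirlingRemainder k - log (2 * π * k) / 2| ≤ 1 / (12 * k) := by
  have hsplit : log (2 * π * k) / 2 = log (2 * k) / 2 + log √π := by
    rw [log_sqrt pi_pos.le, ← add_div, ← log_mul (by positivity) pi_ne_zero]
    ring_nf
  have hlower : log √π ≤ log (Stirling.stirlingSeq k) :=
    log_le_log (by positivity) (Stirling.sqrt_pi_le_stirlingSeq hk)
  rw [stirlingRemainder_eq hk, hsplit, add_sub_add_left_eq_sub,
    abs_of_nonneg (sub_nonneg.2 hlower)]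
  linarith [log_stirlingSeq_le hk]

lemma stirlingRemainder_nonneg (k : ℕ) : 0 ≤ stirlingRemainder k := by
  rcases eq_or_ne k 0 with rfl | hk
  · simp [stirlingRemainder]
  have hlog : 0 ≤ log k := log_natCast_nonneg k
  have hpi : 0 ≤ log (2 * π) := log_nonneg (by linarith [pi_gt_three])
  rw [stirlingRemainder]
  linarith [Stirling.le_log_factorial_stirling hk]

lemma log_pi_le_two : log π ≤ 2 := by
  have hlog : log π ≤ log 4 := log_le_log pi_pos pi_le_four
  rw [show (4 : ℝ) = 2 ^ 2 by norm_num, log_pow] at hlog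
  push_cast at hlog
  linarith [log_two_lt_d9]

lemma stirlingRemainder_le {k : ℕ} (hk : k ≠ 0) : stirlingRemainder k ≤ log k / 2 + 2 := by
  have hk1 : (1 : ℝ) ≤ k := Nat.one_le_cast.2 (Nat.one_le_iff_ne_zero.2 hk)
  have herr : 1 / (12 * (k : ℝ)) ≤ 1 / 12 := by
    gcongr
    linarith
  have hsplit : log (2 * π * k) = log 2 + log π + log k := by
    rw [log_mul (by positivity) (by positivity), log_mul two_ne_zero pi_ne_zero]
  have := (abs_le.1 (abs_stirlingRemainder_sub_le hk)).2
  linarith [log_two_lt_d9, log_pi_le_two]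

/-- The free energy per site `-T/n + entropy` at monomer density `m`, with the term `(log n) / 2`,
which cancels the superexponential growth of the number of configurations, removed. -/
noncomputable def freeEnergy (J h m : ℝ) : ℝ :=
  J * m ^ 2 + (h - J) * m + negMulLog m + negMulLog (1 - m) / 2 - (1 - m) / 2

section DimerWeight

variable {J h m₀ : ℝ} {n d : ℕ}

lemma mul_monomerDensity (hn : n ≠ 0) (hd : 2 * d ≤ n) :
    n * monomerDensity n d = (n - 2 * d : ℕ) := by
  rw [← cast_sub_two_mul_div hd, mul_div_cancel₀ _ (Nat.cast_ne_zero.2 hn)]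

lemma mul_one_sub_monomerDensity (hn : n ≠ 0) : n * (1 - monomerDensity n d) = 2 * d := by
  have : (n : ℝ) ≠ 0 := Nat.cast_ne_zero.2 hn
  rw [monomerDensity]
  field_simp
  ring

lemma mul_log_mul {x y : ℝ} (hx : x ≠ 0) : x * y * log (x * y) = x * (y * log x - negMulLog y) := by
  rcases eq_or_ne y 0 with rfl | hy
  · simp
  · rw [log_mul hx hy, negMulLog]
    ring

lemma log_dimerWeight (hn : n ≠ 0) (hd : 2 * d ≤ n) :
    log (dimerWeight J h n d) =
      n / 2 * log n + n * freeEnergy J h (monomerDensity n d) +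
        (stirlingRemainder n - stirlingRemainder (n - 2 * d) - stirlingRemainder d) := by
  have hmono := mul_monomerDensity hn hd
  have hdimer := mul_one_sub_monomerDensity (d := d) hn
  have hmonoLog := mul_log_mul (y := monomerDensity n d) (Nat.cast_ne_zero (R := ℝ).2 hn)
  have hdimerLog := mul_log_mul (y := 1 - monomerDensity n d) (Nat.cast_ne_zero (R := ℝ).2 hn)
  have hdoubled : (2 * d : ℝ) * log (2 * d) = 2 * (d * log 2 + d * log d) := by
    rcases eq_or_ne d 0 with rfl | hd0
    · simp
    · rw [log_mul two_ne_zero (Nat.cast_ne_zero.2 hd0)]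
      ring
  rw [hmono] at hmonoLog
  rw [hdimer, hdoubled] at hdimerLog
  rw [dimerWeight, log_mul (by positivity) (exp_ne_zero _), log_exp,
    log_div (by positivity) (by positivity), log_mul (by positivity) (by positivity),
    log_mul (by positivity) (by positivity), log_pow]
  unfold stirlingRemainder freeEnergy
  linear_combination (-1) * hmonoLog - hdimerLog / 2 - hmono - hdimer / 2

/-- The logarithm of the Stirling approximation to the weight of monomer density `m`. -/
noncomputable def logStirlingWeight (J h : ℝ) (n : ℕ) (m : ℝ) : ℝ :=
  n / 2 * log n + n * freeEnergy J h m - (log (π * n) + log (m * (1 - m))) / 2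

/-- The weight of `d` dimers relative to the Stirling approximation at the density `m₀`. -/
noncomputable def relWeight (J h m₀ : ℝ) (n d : ℕ) : ℝ :=
  dimerWeight J h n d / exp (logStirlingWeight J h n m₀)

lemma relWeight_pos : 0 < relWeight J h m₀ n d :=
  div_pos (dimerWeight_pos J h n d) (exp_pos _)

lemma log_relWeight :
    log (relWeight J h m₀ n d) = log (dimerWeight J h n d) - logStirlingWeight J h n m₀ := by
  rw [relWeight, log_div (dimerWeight_pos J h n d).ne' (exp_ne_zero _), log_exp]

lemma dimerWeight_eq_mul_relWeight :
    dimerWeight J h n d = exp (logStirlingWeight J h n m₀) * relWeight J h m₀ n d := by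
  rw [relWeight, mul_div_cancel₀ _ (exp_ne_zero _)]

lemma log_relWeight_le (hm₀ : m₀ ∈ Set.Ioo 0 1) (hn : n ≠ 0) (hd : 2 * d ≤ n) :
    log (relWeight J h m₀ n d) ≤
      n * (freeEnergy J h (monomerDensity n d) - freeEnergy J h m₀) + (log n + 3) := by
  have hlog : log (m₀ * (1 - m₀)) ≤ 0 :=
    log_nonpos (mul_nonneg hm₀.1.le (by linarith [hm₀.2])) (by nlinarith [hm₀.1, hm₀.2])
  have hpi : log (π * n) = log π + log n := log_mul pi_ne_zero (Nat.cast_ne_zero.2 hn)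
  rw [log_relWeight, log_dimerWeight hn hd, logStirlingWeight, hpi]
  linarith [stirlingRemainder_le hn, stirlingRemainder_nonneg (n - 2 * d),
    stirlingRemainder_nonneg d, log_pi_le_two]

lemma two_mul_le_of_monomerDensity_pos (hn : n ≠ 0) (hm : 0 < monomerDensity n d) : 2 * d ≤ n := by
  have hpos : (0 : ℝ) < n - 2 * d := (div_pos_iff_of_pos_right (by positivity)).1 hm
  exact_mod_cast (sub_pos.1 hpos).le

lemma abs_log_dimerWeight_sub_le (hn : n ≠ 0) (hm : monomerDensity n d ∈ Set.Ioo 0 1) :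
    |log (dimerWeight J h n d) - logStirlingWeight J h n (monomerDensity n d)| ≤
      1 / (12 * n) + 1 / (12 * (n * monomerDensity n d)) +
        1 / (6 * (n * (1 - monomerDensity n d))) := by
  have hle : 2 * d ≤ n := two_mul_le_of_monomerDensity_pos hn hm.1
  have hmono := mul_monomerDensity hn hle
  have hdimer := mul_one_sub_monomerDensity (d := d) hn
  rw [log_dimerWeight hn hle]
  set m := monomerDensity n d
  have hn0 : (0 : ℝ) < n := by positivity
  have hm0 : 0 < m := hm.1
  have hm1 : 0 < 1 - m := sub_pos.2 hm.2
  have hk0 : n - 2 * d ≠ 0 := by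
    rw [← Nat.cast_ne_zero (R := ℝ), ← hmono]
    positivity
  have hd0 : d ≠ 0 := by
    rintro rfl
    exact (mul_pos hn0 hm1).ne' (by simpa using hdimer)
  have hlogs : log (2 * π * n) - log (2 * π * (n - 2 * d : ℕ)) - log (2 * π * d) =
      -(log (π * n) + log (m * (1 - m))) := by
    have hprod : 2 * π * (n - 2 * d : ℕ) * (2 * π * d) =
        2 * π * n * (π * n * (m * (1 - m))) := by
      rw [← hmono]
      linear_combination (-2 * π ^ 2 * n * m) * hdimer
    have hlogprod := congrArg log hprod
    rw [log_mul (y := 2 * π * d) (by positivity) (by positivity),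
      log_mul (x := 2 * π * n) (by positivity) (by positivity),
      log_mul (x := π * n) (by positivity) (by positivity)] at hlogprod
    linarith
  have hn_err := abs_le.1 (abs_stirlingRemainder_sub_le hn)
  have hk_err := abs_le.1 (abs_stirlingRemainder_sub_le hk0)
  have hd_err := abs_le.1 (abs_stirlingRemainder_sub_le hd0)
  rw [← hmono] at hk_err hlogs
  rw [show 12 * (d : ℝ) = 6 * (n * (1 - m)) by linarith] at hd_err
  rw [logStirlingWeight, abs_le]
  constructor <;> linarith

lemma abs_log_dimerWeight_sub_le_inv_mul {ε : ℝ} (hε : 0 < ε) (hn : n ≠ 0)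
    (hm : monomerDensity n d ∈ Set.Icc ε (1 - ε)) :
    |log (dimerWeight J h n d) - logStirlingWeight J h n (monomerDensity n d)| ≤ ε⁻¹ * (1 / n) := by
  refine (abs_log_dimerWeight_sub_le hn
    ⟨hε.trans_le hm.1, hm.2.trans_lt (sub_lt_self 1 hε)⟩).trans ?_
  set m := monomerDensity n d
  have hε1 : ε ≤ 1 := by linarith [hm.1, hm.2]
  have hn0 : (0 : ℝ) < n := by positivity
  calc 1 / (12 * (n : ℝ)) + 1 / (12 * (n * m)) + 1 / (6 * (n * (1 - m)))
      ≤ 1 / (12 * (n * ε)) + 1 / (12 * (n * ε)) + 1 / (6 * (n * ε)) := by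
        gcongr
        · exact mul_le_of_le_one_right hn0.le hε1
        · exact hm.1
        · linarith [hm.2]
    _ = ε⁻¹ * (1 / n) / 3 := by
        field_simp
        norm_num
    _ ≤ ε⁻¹ * (1 / n) := div_le_self (by positivity) (by norm_num)

lemma exists_abs_log_relWeight_sub_le (J h : ℝ) (hm₀ : m₀ ∈ Set.Ioo 0 1) :
    ∃ δ > 0, ∃ C, ∀ n d : ℕ, n ≠ 0 → |monomerDensity n d - m₀| < δ →
      |log (relWeight J h m₀ n d) -
        n * (freeEnergy J h (monomerDensity n d) - freeEnergy J h m₀)| ≤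
          C * (|monomerDensity n d - m₀| + 1 / n) := by
  obtain ⟨hm0, hm1⟩ := hm₀
  have hdiff : DifferentiableAt ℝ (fun m => log (m * (1 - m))) m₀ :=
    (by fun_prop : DifferentiableAt ℝ (fun m : ℝ => m * (1 - m)) m₀).log
      (mul_pos hm0 (sub_pos.2 hm1)).ne'
  obtain ⟨c, hc⟩ := hdiff.isBigO_sub.bound
  obtain ⟨ε, hε, hεm⟩ := exists_between (lt_min hm0 (sub_pos.2 hm1))
  obtain ⟨hε₀, hε₁⟩ := lt_min_iff.1 hεm
  have hinner : ∀ᶠ m in nhds m₀, m ∈ Set.Icc ε (1 - ε) := Icc_mem_nhds hε₀ (by linarith)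
  obtain ⟨δ, hδ, hball⟩ := Metric.eventually_nhds_iff.1 (hc.and hinner)
  refine ⟨δ, hδ, max c ε⁻¹, fun n d hn hd => ?_⟩
  obtain ⟨hlog, hmem⟩ := hball ((Real.dist_eq _ _).trans_lt hd)
  have hstirling := abs_log_dimerWeight_sub_le_inv_mul (J := J) (h := h) hε hn hmem
  set m := monomerDensity n d
  simp only [Real.norm_eq_abs] at hlog
  rw [log_relWeight]
  calc |log (dimerWeight J h n d) - logStirlingWeight J h n m₀ -
        n * (freeEnergy J h m - freeEnergy J h m₀)|
      = |(log (dimerWeight J h n d) - logStirlingWeight J h n m) -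
          (log (m * (1 - m)) - log (m₀ * (1 - m₀))) / 2| := by
        unfold logStirlingWeight
        ring_nf
    _ ≤ ε⁻¹ * (1 / n) + c * |m - m₀| := by
        refine (abs_sub _ _).trans (add_le_add hstirling ?_)
        rw [abs_div, abs_two]
        linarith [abs_nonneg (log (m * (1 - m)) - log (m₀ * (1 - m₀)))]
    _ ≤ max c ε⁻¹ * (|m - m₀| + 1 / n) := by
        rw [mul_add, add_comm]
        gcongr
        · exact le_max_left _ _
        · exact le_max_right _ _

end DimerWeight

/-! ### Calculus lemmas for Laplace's method -/

lemma isBigO_pow_succ_of_hasDerivAt {G G' : ℝ → ℝ} {m : ℝ} {p : ℕ}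
    (hG : ∀ᶠ x in nhds m, HasDerivAt G (G' x) x) (hm : G m = 0)
    (hG' : G' =O[nhds m] fun x => (x - m) ^ p) : G =O[nhds m] fun x => (x - m) ^ (p + 1) := by
  obtain ⟨C, hC0, hC⟩ := hG'.exists_nonneg
  obtain ⟨δ, hδ, hball⟩ := Metric.eventually_nhds_iff_ball.1 (hG.and hC.bound)
  refine Asymptotics.IsBigO.of_bound C
    (Metric.eventually_nhds_iff_ball.2 ⟨δ, hδ, fun x hx => ?_⟩)
  have hclose : ∀ u ∈ Set.uIcc m x, |u - m| ≤ |x - m| := fun u => Set.abs_sub_left_of_mem_uIcc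
  have hmem : ∀ u ∈ Set.uIcc m x, u ∈ Metric.ball m δ := fun u hu =>
    Metric.mem_ball.2 ((hclose u hu).trans_lt (Metric.mem_ball.1 hx))
  have hmvt := (convex_uIcc m x).norm_image_sub_le_of_norm_hasDerivWithin_le
    (f := G) (f' := G') (C := C * |x - m| ^ p)
    (fun u hu => (hball u (hmem u hu)).1.hasDerivWithinAt)
    (fun u hu => (hball u (hmem u hu)).2.trans ?_) Set.left_mem_uIcc Set.right_mem_uIcc
  · simpa [hm, pow_succ, mul_assoc] using hmvt
  · rw [norm_pow]
    gcongr
    exact hclose u hu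

lemma isBigO_taylor_of_hasDerivAt_pow {f f' ψ : ℝ → ℝ} {m : ℝ} (b : ℕ)
    (hf : ∀ᶠ x in nhds m, HasDerivAt f (f' x) x)
    (hf' : ∀ᶠ x in nhds m, HasDerivAt f' (ψ x * (x - m) ^ b) x)
    (hm : f' m = 0) (hψ : DifferentiableAt ℝ ψ m) :
    (fun x => f x - f m - ψ m / ((b + 1) * (b + 2)) * (x - m) ^ (b + 2)) =O[nhds m]
      fun x => (x - m) ^ (b + 3) := by
  have hpow (k : ℕ) (x : ℝ) :
      HasDerivAt (fun y : ℝ => (y - m) ^ (k + 1)) ((k + 1) * (x - m) ^ k) x := by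
    simpa using ((hasDerivAt_id x).sub_const m).fun_pow (k + 1)
  have hsecond : (fun x => ψ x * (x - m) ^ b - ψ m * (x - m) ^ b) =O[nhds m]
      fun x => (x - m) ^ (b + 1) := by
    refine (hψ.isBigO_sub.mul (Asymptotics.isBigO_refl (fun x => (x - m) ^ b) _)).congr ?_ ?_ <;>
      intro x <;> ring
  have hfirst : (fun x => f' x - ψ m / (b + 1) * (x - m) ^ (b + 1)) =O[nhds m]
      fun x => (x - m) ^ (b + 2) := by
    refine isBigO_pow_succ_of_hasDerivAt (hf'.mono fun x hx => ?_) (by simp [hm]) hsecond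
    refine (hx.sub ((hpow b x).const_mul (ψ m / (b + 1)))).congr_deriv ?_
    field_simp
  refine isBigO_pow_succ_of_hasDerivAt (hf.mono fun x hx => ?_) (by simp) hfirst
  refine ((hx.sub_const (f m)).sub
    ((hpow (b + 1) x).const_mul (ψ m / ((b + 1) * (b + 2))))).congr_deriv ?_
  push_cast
  field_simp
  ring

section CriticalPoint

variable {f f' : ℝ → ℝ} {a b c : ℝ}

lemma strictAntiOn_Ioo_of_hasDerivAt_neg (hc : c ∈ Set.Ioo a b)
    (hf : ∀ x ∈ Set.Ioo a b, HasDerivAt f (f' x) x)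
    (hf' : ∀ x ∈ Set.Ioo a b, x ≠ c → f' x < 0) : StrictAntiOn f (Set.Ioo a b) := by
  have hcont : ContinuousOn f (Set.Ioo a b) := fun x hx => (hf x hx).continuousAt.continuousWithinAt
  have hleft : StrictAntiOn f (Set.Ioc a c) := by
    refine strictAntiOn_of_deriv_neg (convex_Ioc a c)
      (hcont.mono (Set.Ioc_subset_Ioo_right hc.2)) fun x hx => ?_
    rw [interior_Ioc] at hx
    have hx' : x ∈ Set.Ioo a b := ⟨hx.1, hx.2.trans hc.2⟩
    rw [(hf x hx').deriv]
    exact hf' x hx' hx.2.ne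
  have hright : StrictAntiOn f (Set.Ico c b) := by
    refine strictAntiOn_of_deriv_neg (convex_Ico c b)
      (hcont.mono (Set.Ico_subset_Ioo_left hc.1)) fun x hx => ?_
    rw [interior_Ico] at hx
    have hx' : x ∈ Set.Ioo a b := ⟨hc.1.trans hx.1, hx.2⟩
    rw [(hf x hx').deriv]
    exact hf' x hx' hx.1.ne'
  rw [← Set.Ioc_union_Ico_eq_Ioo hc.1 hc.2]
  exact hleft.union hright (isGreatest_Ioc hc.1) (isLeast_Ico hc.2)

lemma lt_of_strictAntiOn_hasDerivAt (hc : c ∈ Set.Ioo a b) (hcont : ContinuousOn f (Set.Icc a b))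
    (hf : ∀ x ∈ Set.Ioo a b, HasDerivAt f (f' x) x) (hanti : StrictAntiOn f' (Set.Ioo a b))
    (hf'c : f' c = 0) {x : ℝ} (hx : x ∈ Set.Icc a b) (hxc : x ≠ c) : f x < f c := by
  have hmono : StrictMonoOn f (Set.Icc a c) := by
    refine strictMonoOn_of_deriv_pos (convex_Icc a c)
      (hcont.mono (Set.Icc_subset_Icc_right hc.2.le)) fun y hy => ?_
    rw [interior_Icc] at hy
    have hy' : y ∈ Set.Ioo a b := ⟨hy.1, hy.2.trans hc.2⟩
    rw [(hf y hy').deriv, ← hf'c]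
    exact hanti hy' hc hy.2
  have hanti' : StrictAntiOn f (Set.Icc c b) := by
    refine strictAntiOn_of_deriv_neg (convex_Icc c b)
      (hcont.mono (Set.Icc_subset_Icc_left hc.1.le)) fun y hy => ?_
    rw [interior_Icc] at hy
    have hy' : y ∈ Set.Ioo a b := ⟨hc.1.trans hy.1, hy.2⟩
    rw [(hf y hy').deriv, ← hf'c]
    exact hanti hc hy' hy.1
  rcases hxc.lt_or_gt with hlt | hgt
  · exact hmono ⟨hx.1, hlt.le⟩ ⟨hc.1.le, le_rfl⟩ hlt
  · exact hanti' ⟨le_rfl, hc.2.le⟩ ⟨hgt.le, hx.2⟩ hgt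

end CriticalPoint

lemma exists_forall_le_sub_of_lt {X : Type*} [PseudoMetricSpace X] {F : X → ℝ} {K : Set X} {x₀ : X}
    (hK : IsCompact K) (hF : ContinuousOn F K) (hmax : ∀ x ∈ K, x ≠ x₀ → F x < F x₀) {δ : ℝ}
    (hδ : 0 < δ) : ∃ c > 0, ∀ x ∈ K, δ ≤ dist x x₀ → F x ≤ F x₀ - c := by
  have hclosed : IsClosed {x | δ ≤ dist x x₀} := isClosed_le (by fun_prop) (by fun_prop)
  obtain ⟨c, hc, hgap⟩ := (hK.inter_right hclosed).exists_forall_le'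
    (f := fun x => F x₀ - F x) (a := 0)
    (continuousOn_const.sub (hF.mono Set.inter_subset_left)) fun x hx => by
      refine sub_pos.2 (hmax x hx.1 ?_)
      rintro rfl
      exact hδ.not_ge (hx.2.trans_eq (dist_self x))
  exact ⟨c, hc, fun x hx hδx => by linarith [hgap x ⟨hx, hδx⟩]⟩

/-- The point `m₀` in the interior of `[0, 1]` is the unique maximizer of `F` on `[0, 1]`, with
leading Taylor term `-κ (x - m₀)ᵃ`. This is the input of Laplace's method at order `a`. -/
structure IsLaplaceMax (F : ℝ → ℝ) (m₀ κ : ℝ) (a : ℕ) : Prop where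
  mem_Ioo : m₀ ∈ Set.Ioo 0 1
  coeff_pos : 0 < κ
  lt_of_ne : ∀ x ∈ Set.Icc 0 1, x ≠ m₀ → F x < F m₀
  isBigO : (fun x => F x - F m₀ + κ * (x - m₀) ^ a) =O[nhds m₀] fun x => (x - m₀) ^ (a + 1)

/-! ### The function `g` and the derivatives of `H` -/

lemma exp_four_mul (x : ℝ) : exp (4 * x) = exp (2 * x) ^ 2 := by
  rw [← exp_nat_mul]
  congr 1
  push_cast
  ring

lemma sqrt_eq_two_mul_mdg_add (x : ℝ) :
    √(exp (4 * x) + 4 * exp (2 * x)) = 2 * mdg x + exp (2 * x) := by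
  rw [mdg]
  ring

lemma mdg_sq (x : ℝ) : mdg x ^ 2 = exp (2 * x) * (1 - mdg x) := by
  have hsq := sq_sqrt (x := exp (4 * x) + 4 * exp (2 * x)) (by positivity)
  rw [sqrt_eq_two_mul_mdg_add, exp_four_mul] at hsq
  linarith

lemma mdg_pos (x : ℝ) : 0 < mdg x := by
  refine half_pos (sub_pos.2 (lt_sqrt_of_sq_lt ?_))
  linarith [exp_four_mul x, exp_pos (2 * x)]

lemma mdg_lt_one (x : ℝ) : mdg x < 1 := by
  by_contra! hle
  nlinarith [mdg_sq x, mdg_pos x, exp_pos (2 * x)]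

lemma eq_mdg_of_sq_eq {x u : ℝ} (hu : 0 ≤ u) (hsq : u ^ 2 = exp (2 * x) * (1 - u)) : u = mdg x := by
  have hpos : 0 < u + mdg x + exp (2 * x) := by linarith [mdg_pos x, exp_pos (2 * x)]
  have hzero : (u - mdg x) * (u + mdg x + exp (2 * x)) = 0 := by
    linear_combination hsq - mdg_sq x
  exact sub_eq_zero.1 ((mul_eq_zero.1 hzero).resolve_right hpos.ne')

lemma log_mdg_sub (x : ℝ) : log (mdg x) - log (1 - mdg x) / 2 = x := by
  have hlog := congrArg log (mdg_sq x)
  rw [log_pow, log_mul (exp_ne_zero _) (sub_pos.2 (mdg_lt_one x)).ne', log_exp] at hlog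
  push_cast at hlog
  linarith

/-- The function `φ(u) = 2u(1 - u) / (2 - u)` for which `g' = φ(g)`. -/
noncomputable def mdphi (u : ℝ) : ℝ := 2 * u * (1 - u) / (2 - u)

/-- The derivative of `mdphi` for `u < 2`. -/
noncomputable def mdphiDeriv (u : ℝ) : ℝ := (2 * u ^ 2 - 8 * u + 4) / (2 - u) ^ 2

lemma mdphi_pos {u : ℝ} (hu : u ∈ Set.Ioo 0 1) : 0 < mdphi u :=
  div_pos (mul_pos (mul_pos two_pos hu.1) (sub_pos.2 hu.2)) (by linarith [hu.2])

lemma inv_mdphi {u : ℝ} (hu : u ∈ Set.Ioo 0 1) : (mdphi u)⁻¹ = 1 / u + 1 / (1 - u) / 2 := by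
  have hu0 : u ≠ 0 := hu.1.ne'
  have hu1 : 1 - u ≠ 0 := (sub_pos.2 hu.2).ne'
  have hu2 : 2 - u ≠ 0 := by linarith [hu.2]
  rw [mdphi]
  field_simp
  ring

lemma hasDerivAt_mdphi {u : ℝ} (hu : u < 2) : HasDerivAt mdphi (mdphiDeriv u) u := by
  have hu2 : 2 - u ≠ 0 := by linarith
  have hderiv := (((hasDerivAt_id u).const_mul 2).mul ((hasDerivAt_id u).const_sub 1)).div
    ((hasDerivAt_id u).const_sub 2) hu2
  refine HasDerivAt.congr_deriv (f := mdphi) hderiv ?_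
  simp only [mdphiDeriv, Pi.mul_apply, id]
  ring

lemma hasDerivAt_mdphiDeriv {u : ℝ} (hu : u < 2) :
    HasDerivAt mdphiDeriv (-8 / (2 - u) ^ 3) u := by
  have hu2 : 2 - u ≠ 0 := by linarith
  have hderiv := ((((hasDerivAt_pow 2 u).const_mul 2).sub ((hasDerivAt_id u).const_mul 8)).add_const
    4).div (((hasDerivAt_id u).const_sub 2).fun_pow 2) (pow_ne_zero 2 hu2)
  refine HasDerivAt.congr_deriv (f := mdphiDeriv) hderiv ?_
  simp only [Pi.sub_apply, id]
  field_simp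
  ring

lemma hasDerivAt_mdg (x : ℝ) : HasDerivAt mdg (mdphi (mdg x)) x := by
  have hexp (c : ℝ) : HasDerivAt (fun y => exp (c * y)) (exp (c * x) * c) x := by
    simpa using ((hasDerivAt_id x).const_mul c).exp
  have hderiv := ((((hexp 4).add ((hexp 2).const_mul 4)).sqrt
    (by simp only [Pi.add_apply]; positivity)).sub (hexp 2)).div_const 2
  refine HasDerivAt.congr_deriv (f := mdg) hderiv ?_
  have h1 : 1 - mdg x ≠ 0 := (sub_pos.2 (mdg_lt_one x)).ne'
  have h2 : 2 - mdg x ≠ 0 := by linarith [mdg_lt_one x]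
  have hE : exp (2 * x) = mdg x ^ 2 / (1 - mdg x) := by rw [mdg_sq, mul_div_cancel_right₀ _ h1]
  have hsqrt : 2 * mdg x + exp (2 * x) = mdg x * (2 - mdg x) / (1 - mdg x) := by
    rw [hE]
    field_simp
    ring
  have h0 : mdg x ≠ 0 := (mdg_pos x).ne'
  simp only [Pi.add_apply]
  rw [sqrt_eq_two_mul_mdg_add, hsqrt, exp_four_mul, hE, mdphi]
  field_simp
  ring

section DerivH

variable (J h : ℝ)

lemma hasDerivAt_mdtau (x : ℝ) : HasDerivAt (mdtau J h) (2 * J) x := by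
  have hderiv := ((((hasDerivAt_id x).const_mul 2).sub_const 1).mul_const J).add_const h
  exact HasDerivAt.congr_deriv (f := mdtau J h) hderiv (by ring)

lemma hasDerivAt_mdg_mdtau (x : ℝ) :
    HasDerivAt (fun y => mdg (mdtau J h y)) (mdphi (mdg (mdtau J h x)) * (2 * J)) x :=
  (hasDerivAt_mdg _).comp x (hasDerivAt_mdtau J h x)

lemma hasDerivAt_mdH (x : ℝ) : HasDerivAt (mdH J h) (2 * J * (mdg (mdtau J h x) - x)) x := by
  have hg1 : 1 - mdg (mdtau J h x) ≠ 0 := (sub_pos.2 (mdg_lt_one _)).ne'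
  have hg2 : 2 - mdg (mdtau J h x) ≠ 0 := by linarith [mdg_lt_one (mdtau J h x)]
  have hsub := (hasDerivAt_mdg_mdtau J h x).const_sub 1
  have hderiv := ((hasDerivAt_pow 2 x).const_mul (-J)).sub ((hsub.add (hsub.log hg1)).div_const 2)
  refine HasDerivAt.congr_deriv (f := mdH J h) hderiv ?_
  rw [mdphi]
  field_simp
  ring

lemma iteratedDeriv_two_mdH :
    iteratedDeriv 2 (mdH J h) = fun x => 2 * J * (mdphi (mdg (mdtau J h x)) * (2 * J) - 1) := by
  rw [iteratedDeriv_succ, iteratedDeriv_one, funext fun x => (hasDerivAt_mdH J h x).deriv]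
  exact funext fun x =>
    (((hasDerivAt_mdg_mdtau J h x).sub (hasDerivAt_id x)).const_mul (2 * J)).deriv

lemma hasDerivAt_mdphi_mdg_mdtau (x : ℝ) :
    HasDerivAt (fun y => mdphi (mdg (mdtau J h y)))
      (mdphiDeriv (mdg (mdtau J h x)) * (mdphi (mdg (mdtau J h x)) * (2 * J))) x :=
  (hasDerivAt_mdphi (by linarith [mdg_lt_one (mdtau J h x)])).comp x (hasDerivAt_mdg_mdtau J h x)

lemma iteratedDeriv_three_mdH :
    iteratedDeriv 3 (mdH J h) = fun x =>
      (2 * J) ^ 3 * (mdphiDeriv (mdg (mdtau J h x)) * mdphi (mdg (mdtau J h x))) := by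
  rw [iteratedDeriv_succ, iteratedDeriv_two_mdH]
  refine funext fun x => (((((hasDerivAt_mdphi_mdg_mdtau J h x).mul_const
    (2 * J)).sub_const 1).const_mul (2 * J)).deriv).trans ?_
  ring

lemma iteratedDeriv_four_mdH (x : ℝ) :
    iteratedDeriv 4 (mdH J h) x =
      (2 * J) ^ 4 * ((-8 / (2 - mdg (mdtau J h x)) ^ 3 * mdphi (mdg (mdtau J h x)) +
        mdphiDeriv (mdg (mdtau J h x)) ^ 2) * mdphi (mdg (mdtau J h x))) := by
  have hlt : mdg (mdtau J h x) < 2 := by linarith [mdg_lt_one (mdtau J h x)]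
  have hphiDeriv := (hasDerivAt_mdphiDeriv hlt).comp x (hasDerivAt_mdg_mdtau J h x)
  rw [iteratedDeriv_succ, iteratedDeriv_three_mdH]
  refine ((hphiDeriv.mul (hasDerivAt_mdphi_mdg_mdtau J h x)).const_mul ((2 * J) ^ 3)).deriv.trans ?_
  simp only [Function.comp]
  ring

end DerivH

/-! ### The free energy and its maximizers -/

section FreeEnergy

variable {J h m : ℝ}

lemma continuous_freeEnergy : Continuous (freeEnergy J h) := by
  unfold freeEnergy
  fun_prop

lemma hasDerivAt_freeEnergy (hm : m ∈ Set.Ioo 0 1) :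
    HasDerivAt (freeEnergy J h) (mdtau J h m - (log m - log (1 - m) / 2)) m := by
  have hone_sub : HasDerivAt (fun x : ℝ => 1 - x) (-1) m := (hasDerivAt_id m).const_sub 1
  have hentropy := hasDerivAt_negMulLog hm.1.ne'
  have hdimer := (hasDerivAt_negMulLog (sub_pos.2 hm.2).ne').comp m hone_sub
  have hderiv := ((((((hasDerivAt_pow 2 m).const_mul J).add
    ((hasDerivAt_id m).const_mul (h - J))).add hentropy).add (hdimer.div_const 2)).sub
    (hone_sub.div_const 2))
  refine HasDerivAt.congr_deriv (f := freeEnergy J h) hderiv ?_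
  rw [mdtau]
  push_cast
  ring

lemma hasDerivAt_mdtau_sub_log (hm : m ∈ Set.Ioo 0 1) :
    HasDerivAt (fun x => mdtau J h x - (log x - log (1 - x) / 2)) (2 * J - (mdphi m)⁻¹) m := by
  have hone_sub : HasDerivAt (fun x : ℝ => 1 - x) (-1) m := (hasDerivAt_id m).const_sub 1
  refine ((hasDerivAt_mdtau J h m).sub ((hasDerivAt_log hm.1.ne').sub
    ((hone_sub.log (sub_pos.2 hm.2).ne').div_const 2))).congr_deriv ?_
  rw [inv_mdphi hm]
  ring

lemma sub_le_mul_log_sub {x u : ℝ} (hx : 0 ≤ x) (hu : 0 < u) : x - u ≤ x * (log x - log u) := by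
  rcases hx.eq_or_lt with rfl | hx
  · simpa using hu.le
  · have hlog := log_le_sub_one_of_pos (div_pos hu hx)
    rw [log_div hu.ne' hx.ne', le_sub_iff_add_le, le_div_iff₀ hx] at hlog
    linarith

lemma mdH_sub_freeEnergy (J h x : ℝ) :
    mdH J h x - freeEnergy J h x =
      x * (log x - log (mdg (mdtau J h x))) +
        (1 - x) * (log (1 - x) - log (1 - mdg (mdtau J h x))) / 2 +
          (mdg (mdtau J h x) - x) / 2 := by
  have htau := log_mdg_sub (mdtau J h x)
  rw [mdH, freeEnergy, negMulLog, negMulLog]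
  generalize mdg (mdtau J h x) = u at htau ⊢
  rw [mdtau] at htau
  linear_combination x * htau

lemma freeEnergy_le_mdH (J h : ℝ) {x : ℝ} (hx : x ∈ Set.Icc 0 1) :
    freeEnergy J h x ≤ mdH J h x := by
  linarith [mdH_sub_freeEnergy J h x, sub_le_mul_log_sub hx.1 (mdg_pos (mdtau J h x)),
    sub_le_mul_log_sub (sub_nonneg.2 hx.2) (sub_pos.2 (mdg_lt_one (mdtau J h x)))]

lemma freeEnergy_eq_mdH (hm : m = mdg (mdtau J h m)) : freeEnergy J h m = mdH J h m := by
  have hsub := mdH_sub_freeEnergy J h m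
  rw [← hm] at hsub
  linarith

lemma mdtau_sub_log_eq_zero (hm : m = mdg (mdtau J h m)) :
    mdtau J h m - (log m - log (1 - m) / 2) = 0 := by
  have hlog := log_mdg_sub (mdtau J h m)
  rw [← hm] at hlog
  rw [hlog, sub_self]

lemma mem_Ioo_of_eq_mdg {x : ℝ} (hm : m = mdg x) : m ∈ Set.Ioo 0 1 :=
  hm ▸ ⟨mdg_pos x, mdg_lt_one x⟩

end FreeEnergy

section NoncriticalMaximizer

variable {J h m₀ : ℝ}

lemma iteratedDeriv_two_mdH_of_eq_mdg (hfix : m₀ = mdg (mdtau J h m₀)) :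
    iteratedDeriv 2 (mdH J h) m₀ = 2 * J * (mdphi m₀ * (2 * J) - 1) := by
  rw [iteratedDeriv_two_mdH]
  dsimp only
  rw [← hfix]

lemma pos_of_iteratedDeriv_two_mdH_neg (hJ : 0 ≤ J)
    (h2 : iteratedDeriv 2 (mdH J h) m₀ < 0) : 0 < J := by
  refine hJ.lt_of_ne' ?_
  rintro rfl
  simp [iteratedDeriv_two_mdH] at h2

lemma two_mul_lt_inv_mdphi (hJ : 0 ≤ J) (hfix : m₀ = mdg (mdtau J h m₀))
    (h2 : iteratedDeriv 2 (mdH J h) m₀ < 0) : 2 * J < (mdphi m₀)⁻¹ := by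
  have hJ0 := pos_of_iteratedDeriv_two_mdH_neg hJ h2
  rw [iteratedDeriv_two_mdH_of_eq_mdg hfix] at h2
  have hlt : mdphi m₀ * (2 * J) < 1 := sub_neg.1 (neg_of_mul_neg_right h2 (by positivity))
  rwa [← one_div, lt_div_iff₀' (mdphi_pos (mem_Ioo_of_eq_mdg hfix))]

lemma neg_inv_sub_inv_eq (hJ : 0 ≤ J) (hfix : m₀ = mdg (mdtau J h m₀))
    (h2 : iteratedDeriv 2 (mdH J h) m₀ < 0) :
    -(iteratedDeriv 2 (mdH J h) m₀)⁻¹ - (2 * J)⁻¹ = ((mdphi m₀)⁻¹ - 2 * J)⁻¹ := by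
  have hJ0 := pos_of_iteratedDeriv_two_mdH_neg hJ h2
  have hφ := mdphi_pos (mem_Ioo_of_eq_mdg hfix)
  rw [iteratedDeriv_two_mdH_of_eq_mdg hfix] at h2 ⊢
  have hne : mdphi m₀ * (2 * J) - 1 ≠ 0 := right_ne_zero_of_mul h2.ne
  have hinv : (mdphi m₀)⁻¹ - 2 * J = -(mdphi m₀ * (2 * J) - 1) / mdphi m₀ := by
    field_simp
    ring
  rw [hinv, inv_div]
  generalize hw : mdphi m₀ * (2 * J) - 1 = w at hne
  field_simp
  linear_combination hw

lemma isLaplaceMax_freeEnergy (hJ : 0 ≤ J) (hmax : ∀ x, x ≠ m₀ → mdH J h x < mdH J h m₀)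
    (hfix : m₀ = mdg (mdtau J h m₀)) (h2 : iteratedDeriv 2 (mdH J h) m₀ < 0) :
    IsLaplaceMax (freeEnergy J h) m₀ (((mdphi m₀)⁻¹ - 2 * J) / 2) 2 := by
  have hm₀ : m₀ ∈ Set.Ioo 0 1 := mem_Ioo_of_eq_mdg hfix
  have hIoo := isOpen_Ioo.mem_nhds hm₀
  have hψ : DifferentiableAt ℝ (fun x => 2 * J - (mdphi x)⁻¹) m₀ :=
    ((hasDerivAt_mdphi (by linarith [hm₀.2])).differentiableAt.inv
      (mdphi_pos hm₀).ne').const_sub (2 * J)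
  refine ⟨hm₀, half_pos (sub_pos.2 (two_mul_lt_inv_mdphi hJ hfix h2)), fun x hx hne => ?_, ?_⟩
  · exact (freeEnergy_le_mdH J h hx).trans_lt ((hmax x hne).trans_eq (freeEnergy_eq_mdH hfix).symm)
  · have htaylor := isBigO_taylor_of_hasDerivAt_pow 0
      (Filter.eventually_of_mem hIoo fun x hx => hasDerivAt_freeEnergy (J := J) (h := h) hx)
      (Filter.eventually_of_mem hIoo fun x hx => by
        simpa using hasDerivAt_mdtau_sub_log (J := J) (h := h) hx)
      (mdtau_sub_log_eq_zero hfix) hψ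
    refine htaylor.congr_left fun x => ?_
    push_cast
    ring

end NoncriticalMaximizer

section CriticalMaximizer

lemma crit_mem_Ioo : 2 - √2 ∈ Set.Ioo (0 : ℝ) 1 :=
  ⟨sub_pos.2 (sqrt_lt' two_pos |>.2 (by norm_num)), by linarith [one_lt_sqrt_two]⟩

lemma crit_sq : (2 - √2) ^ 2 = 4 * (2 - √2) - 2 := by
  linear_combination sq_sqrt (zero_le_two (α := ℝ))

lemma two_mul_Jc : 2 * Jc = 1 / (2 - √2) ^ 2 := by
  have hsq : (2 - √2) ^ 2 = 2 * (3 - 2 * √2) := by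
    rw [crit_sq]
    ring
  rw [hsq, Jc]
  generalize 3 - 2 * √2 = a
  ring

lemma crit_eq_mdg : 2 - √2 = mdg (mdtau Jc hcrit (2 - √2)) := by
  obtain ⟨hm0, hm1⟩ := crit_mem_Ioo
  refine eq_mdg_of_sq_eq hm0.le ?_
  have htau : 2 * mdtau Jc hcrit (2 - √2) = log (2 * √2 - 2) := by
    have hJ : (2 * (2 - √2) - 1) * (2 * Jc) = 1 / 2 := by
      rw [two_mul_Jc, mul_one_div, div_eq_div_iff (pow_ne_zero 2 hm0.ne') two_ne_zero, crit_sq]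
      ring
    rw [mdtau, hcrit]
    linarith
  rw [htau, exp_log (by linarith)]
  linear_combination -sq_sqrt (zero_le_two (α := ℝ))

lemma crit_deriv_two {x : ℝ} (hx : x ∈ Set.Ioo 0 1) :
    2 * Jc - (mdphi x)⁻¹ = -1 / ((2 - √2) ^ 2 * (x * (1 - x))) * (x - (2 - √2)) ^ 2 := by
  have hx0 : x ≠ 0 := hx.1.ne'
  have hx1 : 1 - x ≠ 0 := (sub_pos.2 hx.2).ne'
  have hm0 : 2 - √2 ≠ 0 := crit_mem_Ioo.1.ne'
  rw [two_mul_Jc, inv_mdphi hx]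
  field_simp
  linear_combination x * crit_sq

lemma crit_deriv_four :
    -(iteratedDeriv 4 (mdH Jc hcrit) (2 - √2)) / 24 =
      1 / (12 * (2 - √2) ^ 2 * ((2 - √2) * (1 - (2 - √2)))) := by
  rw [iteratedDeriv_four_mdH, ← crit_eq_mdg]
  have hsq := crit_sq
  have hmem := crit_mem_Ioo
  have hφ : mdphi (2 - √2) = (2 - √2) ^ 2 := by
    have hzero := crit_deriv_two hmem
    rw [sub_self, zero_pow two_ne_zero, mul_zero, sub_eq_zero, two_mul_Jc, one_div] at hzero
    exact (inv_injective hzero).symm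
  have hφ' : mdphiDeriv (2 - √2) = 0 := by
    rw [mdphiDeriv, div_eq_zero_iff]
    left
    linear_combination 2 * hsq
  have hcube : (2 - √2) * (2 - (2 - √2)) ^ 3 = 4 * (1 - (2 - √2)) := by
    linear_combination (√2 * (2 - √2) - 2) * sq_sqrt (zero_le_two (α := ℝ))
  have hm1 : 1 - (2 - √2) ≠ 0 := (sub_pos.2 hmem.2).ne'
  have hm2 : 2 - (2 - √2) ≠ 0 := by linarith [hmem.2]
  rw [two_mul_Jc, hφ, hφ']
  generalize 2 - √2 = m at *
  have hm0 : m ≠ 0 := hmem.1.ne'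
  field_simp
  linear_combination (-24 * m ^ 2) * hcube

lemma isLaplaceMax_freeEnergy_crit :
    IsLaplaceMax (freeEnergy Jc hcrit) (2 - √2)
      (-(iteratedDeriv 4 (mdH Jc hcrit) (2 - √2)) / 24) 4 := by
  have hm₀ := crit_mem_Ioo
  have hfix := mdtau_sub_log_eq_zero crit_eq_mdg
  have hderiv2 {x : ℝ} (hx : x ∈ Set.Ioo 0 1) :=
    (hasDerivAt_mdtau_sub_log (J := Jc) (h := hcrit) hx).congr_deriv (crit_deriv_two hx)
  have hsecond : ∀ x ∈ Set.Ioo (0 : ℝ) 1, x ≠ 2 - √2 →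
      -1 / ((2 - √2) ^ 2 * (x * (1 - x))) * (x - (2 - √2)) ^ 2 < 0 := fun x hx hne =>
    mul_neg_of_neg_of_pos (div_neg_of_neg_of_pos (by norm_num)
      (mul_pos (pow_pos hm₀.1 2) (mul_pos hx.1 (sub_pos.2 hx.2))))
      (sq_pos_of_ne_zero (sub_ne_zero.2 hne))
  refine ⟨hm₀, ?_, fun x hx hne => ?_, ?_⟩
  · have hm0 := hm₀.1
    have hm1 := sub_pos.2 hm₀.2
    rw [crit_deriv_four]
    positivity
  · exact lt_of_strictAntiOn_hasDerivAt hm₀ continuous_freeEnergy.continuousOn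
      (fun y => hasDerivAt_freeEnergy)
      (strictAntiOn_Ioo_of_hasDerivAt_neg hm₀ (fun y => hderiv2) hsecond) hfix hx hne
  · have hIoo := isOpen_Ioo.mem_nhds hm₀
    have hden : (2 - √2) ^ 2 * ((2 - √2) * (1 - (2 - √2))) ≠ 0 :=
      (mul_pos (pow_pos hm₀.1 2) (mul_pos hm₀.1 (sub_pos.2 hm₀.2))).ne'
    have hψ : DifferentiableAt ℝ (fun x => -1 / ((2 - √2) ^ 2 * (x * (1 - x)))) (2 - √2) :=
      (differentiableAt_const _).div (by fun_prop) hden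
    refine (isBigO_taylor_of_hasDerivAt_pow 2
      (Filter.eventually_of_mem hIoo fun x => hasDerivAt_freeEnergy)
      (Filter.eventually_of_mem hIoo fun x => hderiv2) hfix hψ).congr_left fun x => ?_
    rw [crit_deriv_four]
    push_cast
    field_simp
    ring

end CriticalMaximizer

/-! ### The density `exp (-κ yᵃ)` and its tails -/

/-- The unnormalized limiting density `exp (-κ yᵃ)`. -/
noncomputable def expNegPow (κ : ℝ) (a : ℕ) (y : ℝ) : ℝ := exp (-(κ * y ^ a))

/-- The unnormalized upper tail `∫_z^∞ exp (-κ yᵃ) dy`. -/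
noncomputable def expNegPowTail (κ : ℝ) (a : ℕ) (z : ℝ) : ℝ := ∫ y in Set.Ioi z, expNegPow κ a y

section ExpNegPow

variable {κ : ℝ} {a : ℕ} {y z : ℝ}

lemma expNegPow_pos : 0 < expNegPow κ a y := exp_pos _

@[fun_prop]
lemma continuous_expNegPow : Continuous (expNegPow κ a) := by
  unfold expNegPow
  fun_prop

lemma expNegPow_neg (ha : Even a) : expNegPow κ a (-y) = expNegPow κ a y := by
  rw [expNegPow, ha.neg_pow, expNegPow]

lemma expNegPow_le_one (ha : Even a) (hκ : 0 < κ) : expNegPow κ a y ≤ 1 :=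
  exp_le_one_iff.2 (neg_nonpos.2 (mul_nonneg hκ.le (ha.pow_nonneg y)))

lemma expNegPow_anti (hκ : 0 < κ) (hz : 0 ≤ z) (hzy : z ≤ y) :
    expNegPow κ a y ≤ expNegPow κ a z := by
  unfold expNegPow
  gcongr

lemma expNegPow_le_mul_expNegPow_sub (ha0 : a ≠ 0) (hκ : 0 < κ) (hz : 0 ≤ z) (hzy : z ≤ y) :
    expNegPow κ a y ≤ expNegPow κ a z * expNegPow κ a (y - z) := by
  have hpow := pow_add_pow_le hz (sub_nonneg.2 hzy) ha0
  rw [add_sub_cancel] at hpow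
  rw [expNegPow, expNegPow, expNegPow, ← exp_add, exp_le_exp]
  linarith [mul_le_mul_of_nonneg_left hpow hκ.le]

lemma integrable_abs_pow_mul_expNegPow (ha : Even a) (ha0 : a ≠ 0) (hκ : 0 < κ) (p : ℕ) :
    Integrable fun y => |y| ^ p * expNegPow κ a y := by
  have hIoi : IntegrableOn (fun y => |y| ^ p * expNegPow κ a y) (Set.Ioi 0) := by
    refine (integrableOn_rpow_mul_exp_neg_mul_rpow (p := a) (s := p)
      (by linarith [p.cast_nonneg (α := ℝ)]) (by positivity) hκ).congr_fun (fun y hy => ?_)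
      measurableSet_Ioi
    simp only [rpow_natCast, expNegPow, abs_of_pos (Set.mem_Ioi.1 hy), neg_mul]
  rw [← integrableOn_univ, ← Set.Iic_union_Ioi (a := 0), integrableOn_union,
    integrableOn_Iic_iff_integrableOn_Iio]
  refine ⟨?_, hIoi⟩
  rw [← (Measure.measurePreserving_neg (volume : Measure ℝ)).integrableOn_comp_preimage
    (Homeomorph.neg ℝ).measurableEmbedding]
  simpa [Function.comp_def, expNegPow_neg ha] using hIoi

lemma integrable_expNegPow (ha : Even a) (ha0 : a ≠ 0) (hκ : 0 < κ) :
    Integrable (expNegPow κ a) := by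
  simpa using integrable_abs_pow_mul_expNegPow ha ha0 hκ 0

lemma integrable_one_add_abs_pow_mul_expNegPow (ha : Even a) (ha0 : a ≠ 0) (hκ : 0 < κ) (p : ℕ) :
    Integrable fun y => (1 + |y|) ^ p * expNegPow κ a y := by
  refine (((integrable_expNegPow ha ha0 hκ).add
    (integrable_abs_pow_mul_expNegPow ha ha0 hκ p)).const_mul (2 ^ (p - 1))).mono'
      (Continuous.aestronglyMeasurable (by fun_prop)) (.of_forall fun y => ?_)
  have hpow := add_pow_le zero_le_one (abs_nonneg y) p
  rw [one_pow] at hpow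
  rw [norm_of_nonneg (mul_nonneg (by positivity) expNegPow_pos.le)]
  refine (mul_le_mul_of_nonneg_right hpow expNegPow_pos.le).trans_eq ?_
  simp only [Pi.add_apply]
  ring

lemma expNegPowTail_le_integral (ha : Even a) (ha0 : a ≠ 0) (hκ : 0 < κ) :
    expNegPowTail κ a z ≤ ∫ y, expNegPow κ a y :=
  setIntegral_le_integral (integrable_expNegPow ha ha0 hκ) (.of_forall fun _ => expNegPow_pos.le)

lemma expNegPowTail_anti (ha : Even a) (ha0 : a ≠ 0) (hκ : 0 < κ) (hzy : z ≤ y) :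
    expNegPowTail κ a y ≤ expNegPowTail κ a z :=
  setIntegral_mono_set (integrable_expNegPow ha ha0 hκ).integrableOn
    (.of_forall fun _ => expNegPow_pos.le) (Set.Ioi_subset_Ioi hzy).eventuallyLE

lemma integral_expNegPow_pos (ha : Even a) (ha0 : a ≠ 0) (hκ : 0 < κ) :
    0 < ∫ y, expNegPow κ a y :=
  integral_exp_pos (integrable_expNegPow ha ha0 hκ)

lemma expNegPowTail_pos (ha : Even a) (ha0 : a ≠ 0) (hκ : 0 < κ) : 0 < expNegPowTail κ a z :=
  have : NeZero (volume.restrict (Set.Ioi z)) := ⟨by simp⟩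
  integral_exp_pos (integrable_expNegPow ha ha0 hκ).restrict

lemma expNegPowTail_neg (ha : Even a) (ha0 : a ≠ 0) (hκ : 0 < κ) :
    expNegPowTail κ a (-z) = (∫ y, expNegPow κ a y) - expNegPowTail κ a z := by
  have hint := integrable_expNegPow ha ha0 hκ
  have hIic : expNegPowTail κ a z = ∫ y in Set.Iic (-z), expNegPow κ a y := by
    simpa only [expNegPow_neg ha, expNegPowTail] using integral_comp_neg_Ioi z (expNegPow κ a)
  rw [hIic, eq_sub_iff_add_eq, add_comm]
  exact intervalIntegral.integral_Iic_add_Ioi hint.integrableOn hint.integrableOn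

lemma expNegPowTail_le_mul (ha : Even a) (ha0 : a ≠ 0) (hκ : 0 < κ) (hz : 0 ≤ z) :
    expNegPowTail κ a z ≤ expNegPow κ a z * ∫ y, expNegPow κ a y := by
  have hint := integrable_expNegPow ha ha0 hκ
  calc expNegPowTail κ a z
      ≤ ∫ y in Set.Ioi z, expNegPow κ a z * expNegPow κ a (y - z) :=
        setIntegral_mono_on hint.integrableOn ((hint.comp_sub_right z).const_mul _).integrableOn
          measurableSet_Ioi fun y hy =>
            expNegPow_le_mul_expNegPow_sub ha0 hκ hz (Set.mem_Ioi.1 hy).le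
    _ ≤ ∫ y, expNegPow κ a z * expNegPow κ a (y - z) :=
        setIntegral_le_integral ((hint.comp_sub_right z).const_mul _)
          (.of_forall fun _ => (mul_pos expNegPow_pos expNegPow_pos).le)
    _ = _ := by rw [integral_const_mul, integral_sub_right_eq_self (expNegPow κ a) z]

lemma add_inv_pow_pow_sub_le (hz : 0 ≤ z) (a : ℕ) :
    (z + ((1 + z) ^ (a - 1))⁻¹) ^ a - z ^ a ≤ a := by
  set t : ℝ := ((1 + z) ^ (a - 1))⁻¹
  have ht0 : 0 < t := by positivity
  have ht1 : t ≤ 1 := inv_le_one_of_one_le₀ (one_le_pow₀ (by linarith))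
  have hmax : max |z + t| |z| ≤ 1 + z := by
    rw [abs_of_nonneg (by linarith), abs_of_nonneg hz]
    exact max_le (by linarith) (by linarith)
  calc (z + t) ^ a - z ^ a ≤ |z + t - z| * a * max |z + t| |z| ^ (a - 1) :=
        (le_abs_self _).trans (abs_pow_sub_pow_le _ _ _)
    _ ≤ t * a * (1 + z) ^ (a - 1) := by
        rw [add_sub_cancel_left, abs_of_pos ht0]
        gcongr
    _ = a := by
        rw [mul_right_comm, inv_mul_cancel₀ (by positivity), one_mul]

/-- Over a distance `(1 + z)^(1-a)` the density at `z` decreases by at most a constant factor. -/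
lemma expNegPow_le_mul_expNegPowTail (ha : Even a) (ha0 : a ≠ 0) (hκ : 0 < κ) (hz : 0 ≤ z) :
    expNegPow κ a z ≤ exp (κ * a) * (1 + z) ^ (a - 1) * expNegPowTail κ a z := by
  set t : ℝ := ((1 + z) ^ (a - 1))⁻¹ with ht
  have ht0 : 0 < t := by positivity
  have hint := integrable_expNegPow ha ha0 hκ
  have hratio : expNegPow κ a z ≤ exp (κ * a) * expNegPow κ a (z + t) := by
    rw [expNegPow, expNegPow, ← exp_add, exp_le_exp]
    linarith [mul_le_mul_of_nonneg_left (add_inv_pow_pow_sub_le hz a) hκ.le]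
  have hcell : t * expNegPow κ a (z + t) ≤ expNegPowTail κ a z :=
    calc t * expNegPow κ a (z + t) = ∫ _ in Set.Ioc z (z + t), expNegPow κ a (z + t) := by
          rw [setIntegral_const, volume_real_Ioc_of_le (by linarith), add_sub_cancel_left,
            smul_eq_mul]
      _ ≤ ∫ y in Set.Ioc z (z + t), expNegPow κ a y :=
          setIntegral_mono_on (integrableOn_const (by simp)) hint.integrableOn measurableSet_Ioc
            fun y hy => expNegPow_anti hκ (hz.trans hy.1.le) hy.2
      _ ≤ expNegPowTail κ a z :=
          setIntegral_mono_set hint.integrableOn (.of_forall fun _ => expNegPow_pos.le)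
            Set.Ioc_subset_Ioi_self.eventuallyLE
  rw [ht, inv_mul_le_iff₀ (by positivity)] at hcell
  rw [mul_assoc]
  exact hratio.trans (by gcongr)

/-- The region `y ≤ 1 + 2z` is controlled by `1 + y ≤ 2(1 + z)`, its complement by
`1 + y ≤ 2(y - z)` together with the submultiplicativity of the density. -/
lemma one_add_pow_mul_expNegPow_le (ha0 : a ≠ 0) (hκ : 0 < κ) (hz : 0 ≤ z) (hzy : z ≤ y) (p : ℕ) :
    (1 + y) ^ p * expNegPow κ a y ≤
      2 ^ p * (1 + z) ^ p * expNegPow κ a y +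
        2 ^ p * expNegPow κ a z * (|y - z| ^ p * expNegPow κ a (y - z)) := by
  have hf (u : ℝ) : 0 ≤ expNegPow κ a u := expNegPow_pos.le
  have hyz : 0 ≤ y - z := sub_nonneg.2 hzy
  rw [abs_of_nonneg hyz]
  rcases le_total y (1 + 2 * z) with hle | hge
  · refine le_add_of_le_of_nonneg ?_
      (mul_nonneg (mul_nonneg (by positivity) (hf z)) (mul_nonneg (by positivity) (hf (y - z))))
    rw [← mul_pow]
    exact mul_le_mul_of_nonneg_right (pow_le_pow_left₀ (by linarith) (by linarith) p) (hf y)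
  · refine le_add_of_nonneg_of_le (mul_nonneg (by positivity) (hf y)) ?_
    calc (1 + y) ^ p * expNegPow κ a y
        ≤ (2 * (y - z)) ^ p * (expNegPow κ a z * expNegPow κ a (y - z)) :=
          mul_le_mul (pow_le_pow_left₀ (by linarith) (by linarith) p)
            (expNegPow_le_mul_expNegPow_sub ha0 hκ hz hzy) (hf y) (by positivity)
      _ = _ := by
          rw [mul_pow]
          ring

lemma exists_setIntegral_one_add_abs_pow_mul_expNegPow_le (ha : Even a) (ha0 : a ≠ 0) (hκ : 0 < κ)
    {p : ℕ} (hap : a ≤ p + 1) :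
    ∃ K, ∀ z, 0 ≤ z → ∫ y in Set.Ioi z, (1 + |y|) ^ p * expNegPow κ a y ≤
      K * (1 + z) ^ p * expNegPowTail κ a z := by
  have hint := integrable_expNegPow ha ha0 hκ
  have hintp := integrable_abs_pow_mul_expNegPow ha ha0 hκ p
  set m := ∫ u, |u| ^ p * expNegPow κ a u
  have hm : 0 ≤ m := integral_nonneg fun u => mul_nonneg (by positivity) expNegPow_pos.le
  refine ⟨2 ^ p * (1 + exp (κ * a) * m), fun z hz => ?_⟩
  have hintz := ((hintp.comp_sub_right z).const_mul (2 ^ p * expNegPow κ a z)).integrableOn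
    (s := Set.Ioi z)
  have htranslate : ∫ y in Set.Ioi z, |y - z| ^ p * expNegPow κ a (y - z) ≤ m :=
    (setIntegral_le_integral (hintp.comp_sub_right z)
      (.of_forall fun y => mul_nonneg (by positivity) expNegPow_pos.le)).trans_eq
        (integral_sub_right_eq_self (fun u => |u| ^ p * expNegPow κ a u) z)
  have hT := expNegPowTail_pos (z := z) ha ha0 hκ
  calc ∫ y in Set.Ioi z, (1 + |y|) ^ p * expNegPow κ a y
      ≤ ∫ y in Set.Ioi z, (2 ^ p * (1 + z) ^ p * expNegPow κ a y +
          2 ^ p * expNegPow κ a z * (|y - z| ^ p * expNegPow κ a (y - z))) := by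
        refine setIntegral_mono_on
          (integrable_one_add_abs_pow_mul_expNegPow ha ha0 hκ p).integrableOn
          ((hint.const_mul _).integrableOn.add hintz) measurableSet_Ioi fun y hy => ?_
        rw [abs_of_nonneg (hz.trans (Set.mem_Ioi.1 hy).le)]
        exact one_add_pow_mul_expNegPow_le ha0 hκ hz (Set.mem_Ioi.1 hy).le p
    _ = 2 ^ p * (1 + z) ^ p * expNegPowTail κ a z + 2 ^ p * expNegPow κ a z *
          ∫ y in Set.Ioi z, |y - z| ^ p * expNegPow κ a (y - z) := by
        rw [integral_add (hint.const_mul _).integrableOn hintz, integral_const_mul,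
          integral_const_mul, expNegPowTail]
    _ ≤ 2 ^ p * (1 + z) ^ p * expNegPowTail κ a z +
          2 ^ p * (exp (κ * a) * (1 + z) ^ p * expNegPowTail κ a z) * m := by
        have hlow : expNegPow κ a z ≤ exp (κ * a) * (1 + z) ^ p * expNegPowTail κ a z := by
          refine (expNegPow_le_mul_expNegPowTail ha ha0 hκ hz).trans ?_
          gcongr
          · linarith
          · omega
        refine add_le_add_right (mul_le_mul (by gcongr) htranslate ?_ (by positivity)) _
        exact setIntegral_nonneg measurableSet_Ioi fun y _ =>
          mul_nonneg (by positivity) expNegPow_pos.le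
    _ = _ := by ring

lemma expNegPow_two_mul_le (ha0 : a ≠ 0) (hκ : 0 < κ) (hz : 0 ≤ z) :
    expNegPow κ a (2 * z) ≤ exp (-(2 * κ * z ^ a)) := by
  have hpow : 2 * z ^ a ≤ (2 * z) ^ a := by
    rw [mul_pow]
    gcongr
    exact le_self_pow₀ one_le_two ha0
  rw [expNegPow, exp_le_exp]
  linarith [mul_le_mul_of_nonneg_left hpow hκ.le]

lemma pow_mul_exp_neg_le (hκ : 0 < κ) (hz : 0 ≤ z) (p : ℕ) :
    z ^ p * exp (-(κ * z)) ≤ p.factorial / κ ^ p := by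
  have hexp := pow_div_factorial_le_exp (κ * z) (by positivity) p
  rw [div_le_iff₀ (by positivity), mul_pow] at hexp
  rw [le_div_iff₀ (by positivity), exp_neg, mul_right_comm, ← div_eq_mul_inv,
    div_le_iff₀ (exp_pos _)]
  linarith

lemma exists_pow_mul_exp_neg_le_mul_expNegPowTail (ha : Even a) (ha0 : a ≠ 0) (hκ : 0 < κ)
    (p q : ℕ) :
    ∃ K, 0 ≤ K ∧ ∀ Z z, 1 ≤ Z → z ≤ Z →
      Z ^ p * exp (-(2 * κ * Z ^ a)) ≤ K / Z ^ q * expNegPowTail κ a z := by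
  refine ⟨exp (κ * a) * 2 ^ (a - 1) * ((p + q + (a - 1)).factorial / κ ^ (p + q + (a - 1))),
    by positivity, fun Z z hZ hzZ => ?_⟩
  have hZ0 : 0 < Z := by linarith
  have hT := expNegPowTail_pos (z := z) ha ha0 hκ
  have hlow : expNegPow κ a Z ≤ exp (κ * a) * (2 * Z) ^ (a - 1) * expNegPowTail κ a z := by
    refine (expNegPow_le_mul_expNegPowTail ha ha0 hκ hZ0.le).trans ?_
    have hTZ := expNegPowTail_pos (z := Z) ha ha0 hκ
    gcongr
    · linarith
    · exact expNegPowTail_anti ha ha0 hκ hzZ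
  have hsplit : exp (-(2 * κ * Z ^ a)) ≤ exp (-(κ * Z)) * expNegPow κ a Z := by
    rw [expNegPow, ← exp_add, exp_le_exp]
    linarith [mul_le_mul_of_nonneg_left (le_self_pow₀ hZ ha0) hκ.le]
  rw [div_mul_eq_mul_div, le_div_iff₀ (by positivity)]
  calc Z ^ p * exp (-(2 * κ * Z ^ a)) * Z ^ q
      ≤ Z ^ p * (exp (-(κ * Z)) *
          (exp (κ * a) * (2 * Z) ^ (a - 1) * expNegPowTail κ a z)) * Z ^ q := by
        gcongr
        exact hsplit.trans (by gcongr)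
    _ = exp (κ * a) * 2 ^ (a - 1) * (Z ^ (p + q + (a - 1)) * exp (-(κ * Z))) *
          expNegPowTail κ a z := by
        rw [mul_pow, pow_add, pow_add]
        ring
    _ ≤ _ := by
        gcongr
        exact pow_mul_exp_neg_le hκ hZ0.le _

end ExpNegPow

/-! ### Lattice sums approximating the tails -/

lemma abs_exp_sub_one_le_mul_exp_abs (x : ℝ) : |exp x - 1| ≤ |x| * exp |x| := by
  have hcomplex := Complex.norm_exp_sub_sum_le_norm_mul_exp (x : ℂ) 1
  simp only [Finset.sum_range_one, pow_zero, Nat.factorial_zero, Nat.cast_one, div_one, pow_one,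
    Complex.norm_real, norm_eq_abs] at hcomplex
  rwa [← Complex.ofReal_exp, ← Complex.ofReal_one, ← Complex.ofReal_sub, Complex.norm_real,
    norm_eq_abs] at hcomplex

lemma abs_div_div_div_sub_one_le {N D T I e₁ e₂ : ℝ} (hT : 0 < T) (hI : 0 < I)
    (hN : |N - T| ≤ e₁ * T) (hD : |D - I| ≤ e₂ * I) (he₂ : e₂ ≤ 1 / 2) :
    |N / D / (T / I) - 1| ≤ 2 * (e₁ + e₂) := by
  have hDI : I / 2 ≤ D := by nlinarith [(abs_le.1 hD).1]
  have hD0 : 0 < D := (half_pos hI).trans_le hDI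
  have he₁ : 0 ≤ e₁ := nonneg_of_mul_nonneg_left ((abs_nonneg _).trans hN) hT
  have he₂' : 0 ≤ e₂ := nonneg_of_mul_nonneg_left ((abs_nonneg _).trans hD) hI
  have hsplit : N / D / (T / I) - 1 = ((N - T) * I - (D - I) * T) / (D * T) := by
    field_simp
    ring
  rw [hsplit, abs_div, abs_of_pos (mul_pos hD0 hT), div_le_iff₀ (mul_pos hD0 hT)]
  calc |(N - T) * I - (D - I) * T| ≤ |N - T| * I + |D - I| * T := by
        refine (abs_sub _ _).trans_eq ?_
        rw [abs_mul, abs_mul, abs_of_pos hI, abs_of_pos hT]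
    _ ≤ e₁ * T * I + e₂ * I * T := by gcongr
    _ = 2 * (e₁ + e₂) * (I / 2 * T) := by ring
    _ ≤ _ := by gcongr

section RiemannSum

variable {f e : ℝ → ℝ} {x r : ℕ → ℝ} {s L U : ℝ} {M : ℕ}

lemma pairwise_disjoint_Ioc_add (hs : 0 ≤ s) (hx : ∀ d, x (d + 1) + s = x d) :
    Pairwise (Function.onFun Disjoint fun d => Set.Ioc (x d) (x d + s)) := by
  have hanti : Antitone fun d => x d + s := antitone_nat_of_succ_le fun d => by
    linarith [hx d]
  simpa only [Nat.succ_eq_succ, Nat.succ_eq_add_one, hx] using hanti.pairwise_disjoint_on_Ioc_succ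

lemma Ioi_diff_biUnion_Ioc_subset (hx : ∀ d, x (d + 1) + s = x d) (hU : U ≤ x 0) (hL : x M < L) :
    Set.Ioi L \ ⋃ d ∈ {d ∈ Finset.range M | L ≤ x d ∧ x d ≤ U}, Set.Ioc (x d) (x d + s) ⊆
      Set.Ioc L (L + s) ∪ Set.Ioi U := by
  rintro y ⟨hLy, hy⟩
  by_contra! hout
  simp only [Set.mem_union, Set.mem_Ioc, Set.mem_Ioi, not_or, not_and, not_le, not_lt] at hLy hout
  have hex : ∃ d, x d < y := ⟨M, hL.trans hLy⟩
  obtain ⟨k, hk⟩ : ∃ k, Nat.find hex = k + 1 := by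
    refine Nat.exists_eq_succ_of_ne_zero fun hzero => ?_
    have hlt := Nat.find_spec hex
    rw [hzero] at hlt
    linarith [hout.2]
  have hlt := Nat.find_spec hex
  have hle : y ≤ x k := not_lt.1 (Nat.find_min hex (hk ▸ k.lt_succ_self))
  have hLx : L < x (k + 1) := by linarith [hx k, hout.1 hLy]
  rw [hk] at hlt
  have hkM : k + 1 < M := by
    refine lt_of_le_of_ne (hk ▸ Nat.find_min' hex (hL.trans hLy)) fun hkM => ?_
    rw [hkM] at hLx
    exact hLx.not_gt hL
  refine hy (Set.mem_biUnion (x := k + 1) ?_ ⟨hlt, by rwa [hx]⟩)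
  simp only [Finset.coe_filter, Finset.mem_range, Set.mem_ofPred_eq]
  exact ⟨hkM, hLx.le, hlt.le.trans hout.2⟩

lemma abs_mul_sum_sub_setIntegral_biUnion_le (hf : Integrable f) (he : Integrable e) (hs : 0 ≤ s)
    (hx : ∀ d, x (d + 1) + s = x d) {S : Finset ℕ}
    (hcell : ∀ d ∈ S, ∀ y ∈ Set.Ioc (x d) (x d + s), |r d - f y| ≤ e y) :
    |s * ∑ d ∈ S, r d - ∫ y in ⋃ d ∈ S, Set.Ioc (x d) (x d + s), f y| ≤
      ∫ y in ⋃ d ∈ S, Set.Ioc (x d) (x d + s), e y := by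
  have hdisj : (S : Set ℕ).Pairwise (Function.onFun Disjoint fun d => Set.Ioc (x d) (x d + s)) :=
    (pairwise_disjoint_Ioc_add hs hx).set_pairwise _
  rw [integral_biUnion_finset S (fun _ _ => measurableSet_Ioc) hdisj fun _ _ => hf.integrableOn,
    integral_biUnion_finset S (fun _ _ => measurableSet_Ioc) hdisj fun _ _ => he.integrableOn,
    Finset.mul_sum, ← Finset.sum_sub_distrib]
  refine (Finset.abs_sum_le_sum_abs _ _).trans (Finset.sum_le_sum fun d hd => ?_)
  have hconst : s * r d = ∫ _ in Set.Ioc (x d) (x d + s), r d := by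
    rw [setIntegral_const, Real.volume_real_Ioc_of_le (by linarith), add_sub_cancel_left,
      smul_eq_mul]
  rw [hconst, ← integral_sub (integrable_const _) hf.integrableOn,
    ← norm_eq_abs]
  exact norm_integral_le_of_norm_le he.integrableOn
    ((ae_restrict_iff' measurableSet_Ioc).2 (.of_forall fun y hy => hcell d hd y hy))

lemma setIntegral_union_le_add {A B : Set ℝ} (hB : MeasurableSet B) (hf : Integrable f)
    (hf0 : ∀ y, 0 ≤ f y) : ∫ y in A ∪ B, f y ≤ (∫ y in A, f y) + ∫ y in B, f y := by
  rw [← Set.sdiff_union_self, setIntegral_union Set.disjoint_sdiff_left hB hf.integrableOn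
    hf.integrableOn]
  gcongr
  · exact .of_forall hf0
  · exact hf.integrableOn
  · exact Set.sdiff_subset

lemma abs_mul_sum_sub_setIntegral_Ioi_le (hf : Integrable f) (he : Integrable e)
    (hf0 : ∀ y, 0 ≤ f y) (he0 : ∀ y, 0 ≤ e y) (hs : 0 ≤ s) (hx : ∀ d, x (d + 1) + s = x d)
    (hU : U ≤ x 0) (hL : x M < L)
    (hcell : ∀ d, L ≤ x d → x d ≤ U → ∀ y ∈ Set.Ioc (x d) (x d + s), |r d - f y| ≤ e y) :
    |s * ∑ d ∈ Finset.range M with L ≤ x d ∧ x d ≤ U, r d - ∫ y in Set.Ioi L, f y| ≤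
      (∫ y in Set.Ioi L, e y) + ((∫ y in Set.Ioc L (L + s), f y) + ∫ y in Set.Ioi U, f y) := by
  set S := {d ∈ Finset.range M | L ≤ x d ∧ x d ≤ U}
  set A := ⋃ d ∈ S, Set.Ioc (x d) (x d + s)
  have hmem : ∀ d ∈ S, L ≤ x d ∧ x d ≤ U := fun d hd => (Finset.mem_filter.1 hd).2
  have hAmeas : MeasurableSet A := S.measurableSet_biUnion fun _ _ => measurableSet_Ioc
  have hAL : A ⊆ Set.Ioi L := Set.iUnion₂_subset fun d hd y hy =>
    (hmem d hd).1.trans_lt hy.1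
  have hsum := abs_mul_sum_sub_setIntegral_biUnion_le hf he hs hx (S := S) (r := r)
    fun d hd => hcell d (hmem d hd).1 (hmem d hd).2
  have herror : ∫ y in A, e y ≤ ∫ y in Set.Ioi L, e y :=
    setIntegral_mono_set he.integrableOn (.of_forall he0) hAL.eventuallyLE
  have hrest : (∫ y in Set.Ioi L, f y) - ∫ y in A, f y = ∫ y in Set.Ioi L \ A, f y :=
    (setIntegral_sdiff hAmeas hf.integrableOn hAL).symm
  have hrest0 : 0 ≤ ∫ y in Set.Ioi L \ A, f y := integral_nonneg hf0
  have hrest_le : ∫ y in Set.Ioi L \ A, f y ≤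
      (∫ y in Set.Ioc L (L + s), f y) + ∫ y in Set.Ioi U, f y :=
    (setIntegral_mono_set hf.integrableOn (.of_forall hf0)
      (Ioi_diff_biUnion_Ioc_subset hx hU hL).eventuallyLE).trans
      (setIntegral_union_le_add measurableSet_Ioi hf hf0)
  rw [abs_le] at hsum ⊢
  constructor <;> linarith [hsum.1, hsum.2]

end RiemannSum

section CellEstimate

variable {κ C Z x y ℓ ρ : ℝ} {a : ℕ}

lemma abs_add_mul_pow_le (hκ : 0 ≤ κ) (hC : 0 ≤ C) (hZ : 1 ≤ Z) (hxy : |y - x| ≤ 2 / Z ^ (a + 1))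
    (hℓ : |ℓ + κ * x ^ a| ≤ C * (1 + |x|) ^ (a + 1) / Z ^ (a + 1)) :
    |ℓ + κ * y ^ a| ≤ 3 ^ (a + 1) * (C + 2 * a * κ) * (1 + |y|) ^ (a + 1) / Z ^ (a + 1) := by
  have hxy2 : |y - x| ≤ 2 := hxy.trans (div_le_self zero_le_two (one_le_pow₀ hZ))
  have hx : |x| ≤ |y| + 2 := by
    have htri := abs_sub_abs_le_abs_sub x y
    rw [abs_sub_comm] at htri
    linarith
  have hx3 : 1 + |x| ≤ 3 * (1 + |y|) := by linarith [abs_nonneg y]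
  have hmax : max |y| |x| ≤ 3 * (1 + |y|) := max_le (by linarith [abs_nonneg y]) (by linarith)
  have hpow : |y ^ a - x ^ a| ≤ 2 / Z ^ (a + 1) * a * (3 * (1 + |y|)) ^ (a + 1) := by
    calc |y ^ a - x ^ a| ≤ |y - x| * a * max |y| |x| ^ (a - 1) := abs_pow_sub_pow_le y x a
      _ ≤ 2 / Z ^ (a + 1) * a * (3 * (1 + |y|)) ^ (a - 1) := by gcongr
      _ ≤ 2 / Z ^ (a + 1) * a * (3 * (1 + |y|)) ^ (a + 1) := by
        gcongr
        · linarith [abs_nonneg y]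
        · omega
  calc |ℓ + κ * y ^ a| = |(ℓ + κ * x ^ a) + κ * (y ^ a - x ^ a)| := by ring_nf
    _ ≤ |ℓ + κ * x ^ a| + κ * |y ^ a - x ^ a| := by
        rw [← abs_of_nonneg hκ, ← abs_mul, abs_of_nonneg hκ]
        exact abs_add_le _ _
    _ ≤ C * (3 * (1 + |y|)) ^ (a + 1) / Z ^ (a + 1) +
          κ * (2 / Z ^ (a + 1) * a * (3 * (1 + |y|)) ^ (a + 1)) := by
        gcongr
        exact hℓ.trans (by gcongr)
    _ = _ := by
        rw [mul_pow]
        ring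

lemma abs_sub_expNegPow_le (hρ : 0 < ρ) {E : ℝ} (hE : |log ρ + κ * y ^ a| ≤ E) :
    |ρ - expNegPow κ a y| ≤ E * exp E * expNegPow κ a y := by
  have hρ_eq : ρ = exp (log ρ + κ * y ^ a) * expNegPow κ a y := by
    rw [expNegPow, ← exp_add, add_neg_cancel_right, exp_log hρ]
  calc |ρ - expNegPow κ a y| = |exp (log ρ + κ * y ^ a) - 1| * expNegPow κ a y := by
        rw [← abs_of_pos (expNegPow_pos (κ := κ) (a := a) (y := y)), ← abs_mul,
          abs_of_pos expNegPow_pos, sub_one_mul, ← hρ_eq]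
    _ ≤ E * exp E * expNegPow κ a y := by
        have hf : 0 ≤ expNegPow κ a y := expNegPow_pos.le
        have hE0 : 0 ≤ E := (abs_nonneg _).trans hE
        gcongr
        exact (abs_exp_sub_one_le_mul_exp_abs _).trans (by gcongr)

lemma exists_abs_sub_expNegPow_le (a : ℕ) (hκ : 0 ≤ κ) (hC : 0 ≤ C) :
    ∃ K, 0 ≤ K ∧ ∀ Z x y ρ, 1 ≤ Z → |x| ≤ 2 * Z → |y - x| ≤ 2 / Z ^ (a + 1) → 0 < ρ →
      |log ρ + κ * x ^ a| ≤ C * (1 + |x|) ^ (a + 1) / Z ^ (a + 1) →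
      |ρ - expNegPow κ a y| ≤ K / Z ^ (a + 1) * ((1 + |y|) ^ (a + 1) * expNegPow κ a y) := by
  set B := 3 ^ (a + 1) * (C + 2 * a * κ)
  have hB : 0 ≤ B := by positivity
  refine ⟨B * exp (B * 5 ^ (a + 1)), by positivity, fun Z x y ρ hZ hx hxy hρ hlog => ?_⟩
  have hf : 0 ≤ expNegPow κ a y := expNegPow_pos.le
  have hxy2 : |y - x| ≤ 2 := hxy.trans (div_le_self zero_le_two (one_le_pow₀ hZ))
  have hy : 1 + |y| ≤ 5 * Z := by linarith [abs_sub_abs_le_abs_sub y x]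
  have hexponent : B * (1 + |y|) ^ (a + 1) / Z ^ (a + 1) ≤ B * 5 ^ (a + 1) := by
    rw [div_le_iff₀ (by positivity), mul_assoc B, ← mul_pow]
    gcongr
  calc |ρ - expNegPow κ a y|
      ≤ B * (1 + |y|) ^ (a + 1) / Z ^ (a + 1) * exp (B * (1 + |y|) ^ (a + 1) / Z ^ (a + 1)) *
          expNegPow κ a y := abs_sub_expNegPow_le hρ (abs_add_mul_pow_le hκ hC hZ hxy hlog)
    _ ≤ B * (1 + |y|) ^ (a + 1) / Z ^ (a + 1) * exp (B * 5 ^ (a + 1)) * expNegPow κ a y := by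
        gcongr
    _ = _ := by ring

end CellEstimate

/-- Nodes `x 0 > x 1 > ⋯ > x M` with spacing `s` and weights `r d > 0` for which Laplace's method
applies at scale `Z`: inside the window `[-2Z, 2Z]` the weight at a node `x` is
`exp (-κ xᵃ)` up to a relative error of order `(1 + |x|)^(a+1) / Z^(a+1)`, and outside the window
the weights are negligible. -/
structure IsLaplaceLattice (κ C Z s : ℝ) (a p M : ℕ) (x r : ℕ → ℝ) : Prop where
  one_le_scale : 1 ≤ Z
  spacing_pos : 0 < s
  spacing_le : s ≤ 2 / Z ^ (a + 1)
  node_succ : ∀ d, x (d + 1) + s = x d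
  window_le : 2 * Z ≤ x 0
  lt_window : x M < -(2 * Z)
  weight_pos : ∀ d, 0 < r d
  abs_log_weight_le : ∀ d, |x d| ≤ 2 * Z →
    |log (r d) + κ * x d ^ a| ≤ C * (1 + |x d|) ^ (a + 1) / Z ^ (a + 1)
  weight_le : ∀ d < M, 2 * Z < |x d| → s * r d ≤ C * Z ^ p * exp (-(2 * κ * Z ^ a)) / M

namespace IsLaplaceLattice

variable {κ C Z s : ℝ} {a p M : ℕ} {x r : ℕ → ℝ}

lemma mul_sum_le_of_window_lt (hlat : IsLaplaceLattice κ C Z s a p M x r) (hC : 0 ≤ C)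
    {T : Finset ℕ} (hT : ∀ d ∈ T, d < M ∧ 2 * Z < |x d|) :
    s * ∑ d ∈ T, r d ≤ C * Z ^ p * exp (-(2 * κ * Z ^ a)) := by
  have hZ := hlat.one_le_scale
  have hcard : (T.card : ℝ) ≤ M := by
    exact_mod_cast (Finset.card_le_card fun d hd => Finset.mem_range.2 (hT d hd).1).trans_eq
      (Finset.card_range M)
  calc s * ∑ d ∈ T, r d = ∑ d ∈ T, s * r d := Finset.mul_sum ..
    _ ≤ T.card * (C * Z ^ p * exp (-(2 * κ * Z ^ a)) / M) := by
        rw [← nsmul_eq_mul]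
        exact Finset.sum_le_card_nsmul _ _ _ fun d hd => hlat.weight_le d (hT d hd).1 (hT d hd).2
    _ ≤ M * (C * Z ^ p * exp (-(2 * κ * Z ^ a)) / M) := by gcongr
    _ ≤ C * Z ^ p * exp (-(2 * κ * Z ^ a)) := by
        rw [mul_div_left_comm]
        exact mul_le_of_le_one_right (by positivity) (div_self_le_one _)

lemma exists_abs_mul_sum_sub_tail_le (ha : Even a) (ha0 : a ≠ 0) (hκ : 0 < κ) (hC : 0 ≤ C)
    (p : ℕ) : ∃ K, 0 ≤ K ∧ ∀ {Z s L M x r} {S : Finset ℕ}, IsLaplaceLattice κ C Z s a p M x r →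
      -(2 * Z) ≤ L → (∀ d ∈ S, d < M) → (∀ d < M, |x d| ≤ 2 * Z → (d ∈ S ↔ L ≤ x d)) →
      |s * ∑ d ∈ S, r d - expNegPowTail κ a L| ≤
        K / Z ^ (a + 1) * (∫ y in Set.Ioi L, (1 + |y|) ^ (a + 1) * expNegPow κ a y) +
          (∫ y in Set.Ioc L (L + s), expNegPow κ a y) +
          (expNegPowTail κ a (2 * Z) + C * Z ^ p * exp (-(2 * κ * Z ^ a))) := by
  obtain ⟨K, hK, hcell⟩ := exists_abs_sub_expNegPow_le a hκ.le hC
  refine ⟨K, hK, fun {Z s L M x r S} hlat hL hSM hS => ?_⟩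
  set W := {d ∈ Finset.range M | L ≤ x d ∧ x d ≤ 2 * Z}
  have hWS : W ⊆ S := fun d hd => by
    obtain ⟨hdM, hLd, hdZ⟩ := by simpa only [W, Finset.mem_filter, Finset.mem_range] using hd
    exact (hS d hdM (abs_le.2 ⟨hL.trans hLd, hdZ⟩)).2 hLd
  have hwindow : |s * ∑ d ∈ W, r d - expNegPowTail κ a L| ≤
      (∫ y in Set.Ioi L, K / Z ^ (a + 1) * ((1 + |y|) ^ (a + 1) * expNegPow κ a y)) +
        ((∫ y in Set.Ioc L (L + s), expNegPow κ a y) + expNegPowTail κ a (2 * Z)) := by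
    have hZ := hlat.one_le_scale
    have hf (y : ℝ) : 0 ≤ expNegPow κ a y := expNegPow_pos.le
    refine abs_mul_sum_sub_setIntegral_Ioi_le (integrable_expNegPow ha ha0 hκ)
      ((integrable_one_add_abs_pow_mul_expNegPow ha ha0 hκ _).const_mul _) hf
      (fun y => mul_nonneg (by positivity) (mul_nonneg (by positivity) (hf y)))
      hlat.spacing_pos.le hlat.node_succ hlat.window_le
      (hlat.lt_window.trans_le hL) fun d hLd hdZ y hy => ?_
    have hd : |x d| ≤ 2 * Z := abs_le.2 ⟨hL.trans hLd, hdZ⟩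
    refine hcell Z (x d) y (r d) hZ hd ?_ (hlat.weight_pos d) (hlat.abs_log_weight_le d hd)
    rw [abs_of_pos (sub_pos.2 hy.1)]
    linarith [hy.2, hlat.spacing_le]
  have houtside : s * ∑ d ∈ S \ W, r d ≤ C * Z ^ p * exp (-(2 * κ * Z ^ a)) := by
    refine hlat.mul_sum_le_of_window_lt hC fun d hd => ?_
    obtain ⟨hdS, hdW⟩ := Finset.mem_sdiff.1 hd
    refine ⟨hSM d hdS, not_le.1 fun hle => hdW ?_⟩
    exact Finset.mem_filter.2 ⟨Finset.mem_range.2 (hSM d hdS),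
      (hS d (hSM d hdS) hle).1 hdS, (abs_le.1 hle).2⟩
  have houtside0 : 0 ≤ s * ∑ d ∈ S \ W, r d :=
    mul_nonneg hlat.spacing_pos.le (Finset.sum_nonneg fun d _ => (hlat.weight_pos d).le)
  rw [integral_const_mul] at hwindow
  rw [← Finset.sum_sdiff hWS, mul_add]
  rw [abs_le] at hwindow ⊢
  constructor <;> linarith [hwindow.1, hwindow.2]

end IsLaplaceLattice

section LaplaceRatio

variable {κ C : ℝ} {a : ℕ}

lemma setIntegral_Ioc_add_expNegPow_le {s L B : ℝ} (hs : 0 ≤ s)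
    (hB : ∀ y, L ≤ y → expNegPow κ a y ≤ B) :
    ∫ y in Set.Ioc L (L + s), expNegPow κ a y ≤ s * B := by
  have hnorm := norm_setIntegral_le_of_norm_le_const (μ := volume) (s := Set.Ioc L (L + s))
    (f := expNegPow κ a) (C := B) (by simp) fun y hy => by
      rw [norm_of_nonneg expNegPow_pos.le]
      exact hB y hy.1.le
  rw [Real.volume_real_Ioc_of_le (by linarith), add_sub_cancel_left, mul_comm] at hnorm
  exact (le_norm_self _).trans hnorm

lemma exists_expNegPowTail_two_mul_add_le (ha : Even a) (ha0 : a ≠ 0) (hκ : 0 < κ) (hC : 0 ≤ C)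
    (p : ℕ) : ∃ K, 0 ≤ K ∧ ∀ Z z, 1 ≤ Z → z ≤ Z →
      expNegPowTail κ a (2 * Z) + C * Z ^ p * exp (-(2 * κ * Z ^ a)) ≤
        K / Z ^ (a + 1) * expNegPowTail κ a z := by
  obtain ⟨K₁, hK₁, hbound₁⟩ :=
    exists_pow_mul_exp_neg_le_mul_expNegPowTail ha ha0 hκ 0 (a + 1)
  obtain ⟨K₂, hK₂, hbound₂⟩ :=
    exists_pow_mul_exp_neg_le_mul_expNegPowTail ha ha0 hκ p (a + 1)
  have hI := integral_expNegPow_pos ha ha0 hκ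
  refine ⟨K₁ * (∫ y, expNegPow κ a y) + C * K₂, by positivity, fun Z z hZ hz => ?_⟩
  have hZ0 : 0 ≤ Z := by linarith
  calc expNegPowTail κ a (2 * Z) + C * Z ^ p * exp (-(2 * κ * Z ^ a))
      ≤ Z ^ 0 * exp (-(2 * κ * Z ^ a)) * (∫ y, expNegPow κ a y) +
          C * (Z ^ p * exp (-(2 * κ * Z ^ a))) := by
        rw [pow_zero, one_mul, mul_assoc C]
        gcongr
        exact (expNegPowTail_le_mul ha ha0 hκ (by linarith)).trans
          (mul_le_mul_of_nonneg_right (expNegPow_two_mul_le ha0 hκ hZ0) hI.le)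
    _ ≤ K₁ / Z ^ (a + 1) * expNegPowTail κ a z * (∫ y, expNegPow κ a y) +
          C * (K₂ / Z ^ (a + 1) * expNegPowTail κ a z) := by
        exact add_le_add (mul_le_mul_of_nonneg_right (hbound₁ Z z hZ hz) hI.le)
          (mul_le_mul_of_nonneg_left (hbound₂ Z z hZ hz) hC)
    _ = _ := by ring

namespace IsLaplaceLattice

lemma exists_abs_mul_sum_sub_tail_le_mul (ha : Even a) (ha0 : a ≠ 0) (hκ : 0 < κ) (hC : 0 ≤ C)
    (p : ℕ) : ∃ K, ∀ {Z s z M x r}, IsLaplaceLattice κ C Z s a p M x r → 0 ≤ z → z ≤ Z →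
      |s * ∑ d ∈ Finset.range M with z ≤ x d, r d - expNegPowTail κ a z| ≤
        K * ((1 + z) ^ (a + 1) / Z ^ (a + 1)) * expNegPowTail κ a z := by
  obtain ⟨K₁, hK₁, hsum⟩ := exists_abs_mul_sum_sub_tail_le ha ha0 hκ hC p
  obtain ⟨K₂, hmoment⟩ :=
    exists_setIntegral_one_add_abs_pow_mul_expNegPow_le ha ha0 hκ (p := a + 1) (by omega)
  obtain ⟨K₃, hK₃, hfar⟩ := exists_expNegPowTail_two_mul_add_le ha ha0 hκ hC p
  refine ⟨K₁ * K₂ + 2 * exp (κ * a) + K₃, fun {Z s z M x r} hlat hz hzZ => ?_⟩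
  have hZ := hlat.one_le_scale
  have hT : 0 < expNegPowTail κ a z := expNegPowTail_pos ha ha0 hκ
  have hone : 1 ≤ 1 + z := by linarith
  have hfirst : ∫ y in Set.Ioc z (z + s), expNegPow κ a y ≤
      2 / Z ^ (a + 1) * (exp (κ * a) * (1 + z) ^ (a + 1) * expNegPowTail κ a z) := by
    refine (setIntegral_Ioc_add_expNegPow_le hlat.spacing_pos.le
      fun y hy => expNegPow_anti hκ hz hy).trans ?_
    refine mul_le_mul hlat.spacing_le ?_ expNegPow_pos.le (by positivity)
    refine (expNegPow_le_mul_expNegPowTail ha ha0 hκ hz).trans ?_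
    gcongr
    omega
  have hlast : K₃ / Z ^ (a + 1) ≤ K₃ * (1 + z) ^ (a + 1) / Z ^ (a + 1) := by
    gcongr
    exact le_mul_of_one_le_right hK₃ (one_le_pow₀ hone)
  calc |s * ∑ d ∈ Finset.range M with z ≤ x d, r d - expNegPowTail κ a z|
      ≤ _ := hsum hlat (by linarith) (fun d hd => Finset.mem_range.1 (Finset.mem_filter.1 hd).1)
        fun d hd _ => by simp [hd]
    _ ≤ K₁ / Z ^ (a + 1) * (K₂ * (1 + z) ^ (a + 1) * expNegPowTail κ a z) +
          2 / Z ^ (a + 1) * (exp (κ * a) * (1 + z) ^ (a + 1) * expNegPowTail κ a z) +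
          K₃ * (1 + z) ^ (a + 1) / Z ^ (a + 1) * expNegPowTail κ a z := by
        gcongr
        · exact hmoment z hz
        · exact (hfar Z z hZ hzZ).trans (mul_le_mul_of_nonneg_right hlast hT.le)
    _ = _ := by ring

lemma exists_abs_mul_sum_sub_integral_le_mul (ha : Even a) (ha0 : a ≠ 0) (hκ : 0 < κ)
    (hC : 0 ≤ C) (p : ℕ) : ∃ K, ∀ {Z s M x r}, IsLaplaceLattice κ C Z s a p M x r →
      |s * ∑ d ∈ Finset.range M, r d - ∫ y, expNegPow κ a y| ≤
        K / Z ^ (a + 1) * ∫ y, expNegPow κ a y := by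
  obtain ⟨K₁, hK₁, hsum⟩ := exists_abs_mul_sum_sub_tail_le ha ha0 hκ hC p
  obtain ⟨K₃, hK₃, hfar⟩ := exists_expNegPowTail_two_mul_add_le ha ha0 hκ hC p
  set I := ∫ y, expNegPow κ a y
  set I' := ∫ y, (1 + |y|) ^ (a + 1) * expNegPow κ a y
  have hI : 0 < I := integral_expNegPow_pos ha ha0 hκ
  refine ⟨(K₁ * I' + 2) / I + 2 * K₃, fun {Z s M x r} hlat => ?_⟩
  have hZ := hlat.one_le_scale
  have hsum' := hsum hlat (S := Finset.range M) (L := -(2 * Z)) le_rfl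
    (fun d => Finset.mem_range.1) fun d hd hx => by simp [hd, (abs_le.1 hx).1]
  rw [expNegPowTail_neg ha ha0 hκ] at hsum'
  have hmoment : ∫ y in Set.Ioi (-(2 * Z)), (1 + |y|) ^ (a + 1) * expNegPow κ a y ≤ I' :=
    setIntegral_le_integral (integrable_one_add_abs_pow_mul_expNegPow ha ha0 hκ _)
      (.of_forall fun y => mul_nonneg (by positivity) expNegPow_pos.le)
  have hfirst := (setIntegral_Ioc_add_expNegPow_le (L := -(2 * Z)) hlat.spacing_pos.le
    fun y _ => expNegPow_le_one ha hκ).trans ((mul_one s).trans_le hlat.spacing_le)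
  have hlast : K₃ / Z ^ (a + 1) * expNegPowTail κ a Z ≤ K₃ / Z ^ (a + 1) * I := by
    gcongr
    exact expNegPowTail_le_integral ha ha0 hκ
  have hfar0 : 0 ≤ C * Z ^ p * exp (-(2 * κ * Z ^ a)) := by positivity
  have htail : 0 < expNegPowTail κ a (2 * Z) := expNegPowTail_pos ha ha0 hκ
  calc |s * ∑ d ∈ Finset.range M, r d - I|
      ≤ |s * ∑ d ∈ Finset.range M, r d - (I - expNegPowTail κ a (2 * Z))| +
          expNegPowTail κ a (2 * Z) := by
        refine (abs_sub_le _ (I - expNegPowTail κ a (2 * Z)) _).trans_eq ?_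
        rw [sub_sub_cancel_left, abs_neg, abs_of_pos htail]
    _ ≤ K₁ / Z ^ (a + 1) * I' + 2 / Z ^ (a + 1) + 2 * (K₃ / Z ^ (a + 1) * I) := by
        have hmoment' := mul_le_mul_of_nonneg_left hmoment
          (div_nonneg hK₁ (by positivity : 0 ≤ Z ^ (a + 1)))
        linarith [hfar Z Z hZ le_rfl]
    _ = _ := by
        field_simp

theorem exists_abs_sum_div_sum_div_sub_one_le (ha : Even a) (ha0 : a ≠ 0) (hκ : 0 < κ)
    (hC : 0 ≤ C) (p : ℕ) : ∃ K, ∀ᶠ Z in Filter.atTop, ∀ {s z M x r},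
      IsLaplaceLattice κ C Z s a p M x r → 0 ≤ z → z ≤ Z →
      |(∑ d ∈ Finset.range M with z ≤ x d, r d) / (∑ d ∈ Finset.range M, r d) /
          (expNegPowTail κ a z / ∫ y, expNegPow κ a y) - 1| ≤
        K * ((1 + z) ^ (a + 1) / Z ^ (a + 1)) := by
  obtain ⟨K₁, hnum⟩ := exists_abs_mul_sum_sub_tail_le_mul ha ha0 hκ hC p
  obtain ⟨K₂, hden⟩ := exists_abs_mul_sum_sub_integral_le_mul ha ha0 hκ hC p
  refine ⟨2 * (K₁ + |K₂|), ?_⟩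
  filter_upwards [Filter.eventually_ge_atTop (2 * |K₂|)] with Z hZ s z M x r hlat hz hzZ
  have hZ1 := hlat.one_le_scale
  have hpow : Z ≤ Z ^ (a + 1) := le_self_pow₀ hZ1 a.succ_ne_zero
  have hhalf : K₂ / Z ^ (a + 1) ≤ 1 / 2 := by
    rw [div_le_iff₀ (by positivity)]
    linarith [le_abs_self K₂]
  have hratio := abs_div_div_div_sub_one_le (expNegPowTail_pos ha ha0 hκ)
    (integral_expNegPow_pos ha ha0 hκ) (hnum hlat hz hzZ) (hden hlat) hhalf
  rw [mul_div_mul_left _ _ hlat.spacing_pos.ne'] at hratio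
  refine hratio.trans ?_
  have hK₂ : K₂ / Z ^ (a + 1) ≤ |K₂| * ((1 + z) ^ (a + 1) / Z ^ (a + 1)) := by
    rw [← mul_div_assoc]
    gcongr
    exact (le_abs_self K₂).trans
      (le_mul_of_one_le_right (abs_nonneg _) (one_le_pow₀ (by linarith)))
  linarith

end IsLaplaceLattice

end LaplaceRatio

/-! ### The lattice of scaled monomer densities -/

namespace IsLaplaceMax

variable {F : ℝ → ℝ} {m₀ κ : ℝ} {a : ℕ}

lemma eventually_abs_add_mul_pow_le (hF : IsLaplaceMax F m₀ κ a) :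
    ∃ C > 0, ∀ᶠ x in nhds m₀, |F x - F m₀ + κ * (x - m₀) ^ a| ≤ C * |x - m₀| ^ (a + 1) := by
  obtain ⟨C, hC, hbound⟩ := hF.isBigO.exists_pos
  refine ⟨C, hC, hbound.bound.mono fun x hx => ?_⟩
  rwa [norm_eq_abs, norm_eq_abs, abs_pow] at hx

lemma eventually_le_sub_mul_pow (hF : IsLaplaceMax F m₀ κ a) (ha : Even a) :
    ∀ᶠ x in nhds m₀, F x ≤ F m₀ - κ / 2 * (x - m₀) ^ a := by
  obtain ⟨C, hC, hbound⟩ := hF.eventually_abs_add_mul_pow_le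
  have hsmall : ∀ᶠ x in nhds m₀, C * |x - m₀| ≤ κ / 2 := by
    have hlim : Filter.Tendsto (fun x => C * |x - m₀|) (nhds m₀) (nhds (C * |m₀ - m₀|)) :=
      Continuous.tendsto (by fun_prop) m₀
    rw [sub_self, abs_zero, mul_zero] at hlim
    exact hlim.eventually_le_const (half_pos hF.coeff_pos)
  filter_upwards [hbound, hsmall] with x hx hxs
  have hpow : 0 ≤ (x - m₀) ^ a := ha.pow_nonneg _
  have herror : C * |x - m₀| ^ (a + 1) ≤ κ / 2 * (x - m₀) ^ a := by
    rw [pow_succ', ha.pow_abs, ← mul_assoc]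
    gcongr
  linarith [(abs_le.1 hx).2]

lemma exists_le_sub_min (hF : IsLaplaceMax F m₀ κ a) (ha : Even a)
    (hcont : ContinuousOn F (Set.Icc 0 1)) :
    ∃ c > 0, ∀ x ∈ Set.Icc 0 1, F x ≤ F m₀ - min (κ / 2 * (x - m₀) ^ a) c := by
  obtain ⟨δ, hδ, hnear⟩ := Metric.eventually_nhds_iff.1 (hF.eventually_le_sub_mul_pow ha)
  obtain ⟨c, hc, hfar⟩ := exists_forall_le_sub_of_lt isCompact_Icc hcont hF.lt_of_ne hδ
  refine ⟨c, hc, fun x hx => ?_⟩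
  rcases lt_or_ge (dist x m₀) δ with hlt | hge
  · exact (hnear hlt).trans (sub_le_sub_left (min_le_left _ _) _)
  · exact (hfar x hx hge).trans (sub_le_sub_left (min_le_right _ _) _)

end IsLaplaceMax

lemma two_mul_le_pow_succ_mul {Z t : ℝ} {a : ℕ} (ha0 : a ≠ 0) (hZ : 1 ≤ Z) (ht : 0 < t)
    (hZt : 2 / t ≤ Z) : 2 * Z ≤ Z ^ (a + 1) * t := by
  have hpow : Z ≤ Z ^ a := le_self_pow₀ hZ ha0
  rw [div_le_iff₀ ht] at hZt
  calc 2 * Z ≤ Z * t * Z := by gcongr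
    _ ≤ Z ^ a * t * Z := by gcongr
    _ = _ := by ring

lemma pow_mul_pow_succ_add_le {ν u : ℝ} {a : ℕ} (ha0 : a ≠ 0) (hν : 1 ≤ ν) (hu : 0 ≤ u) :
    ν ^ a * u ^ (a + 1) + u + 1 / ν ^ a ≤ 2 * (1 + ν * u) ^ (a + 1) / ν := by
  have hν0 : 0 < ν := by linarith
  have hself : 1 + ν * u ≤ (1 + ν * u) ^ (a + 1) :=
    le_self_pow₀ (le_add_of_nonneg_right (by positivity)) a.succ_ne_zero
  have hpow : (ν * u) ^ (a + 1) ≤ (1 + ν * u) ^ (a + 1) := by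
    gcongr
    linarith
  have hle : ν / ν ^ a ≤ 1 := (div_le_one (by positivity)).2 (le_self_pow₀ hν ha0)
  rw [le_div_iff₀ hν0]
  calc (ν ^ a * u ^ (a + 1) + u + 1 / ν ^ a) * ν
      = (ν * u) ^ (a + 1) + ν * u + ν / ν ^ a := by ring
    _ ≤ 2 * (1 + ν * u) ^ (a + 1) := by linarith

lemma two_mul_mul_pow_le_of_two_mul_lt {κ Z u : ℝ} {a : ℕ} (ha : Even a) (ha0 : a ≠ 0)
    (hκ : 0 ≤ κ) (hZ : 0 ≤ Z) (hu : 2 * Z < |Z ^ (a + 1) * u|) :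
    2 * κ * Z ^ a ≤ Z ^ (a * (a + 1)) * (κ / 2 * u ^ a) := by
  have hfour : (2 : ℝ) ^ 2 ≤ 2 ^ a := by
    gcongr
    · exact one_le_two
    · exact Nat.le_of_dvd (Nat.pos_of_ne_zero ha0) ha.two_dvd
  calc 2 * κ * Z ^ a = κ / 2 * (2 ^ 2 * Z ^ a) := by ring
    _ ≤ κ / 2 * (2 ^ a * Z ^ a) := by gcongr
    _ = κ / 2 * (2 * Z) ^ a := by rw [mul_pow]
    _ ≤ κ / 2 * |Z ^ (a + 1) * u| ^ a := by gcongr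
    _ = Z ^ (a * (a + 1)) * (κ / 2 * u ^ a) := by
      rw [ha.pow_abs, mul_pow, ← pow_mul, mul_comm (a + 1)]
      ring

section DimerLattice

variable {J h m₀ κ : ℝ} {a n d : ℕ}

lemma monomerDensity_mem_Icc (hd : 2 * d ≤ n) : monomerDensity n d ∈ Set.Icc 0 1 := by
  rw [← cast_sub_two_mul_div hd]
  exact ⟨by positivity, div_le_one_of_le₀ (Nat.cast_le.2 (n.sub_le _)) (by positivity)⟩

lemma monomerDensity_zero (hn : n ≠ 0) : monomerDensity n 0 = 1 := by
  simp [monomerDensity, hn]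

lemma monomerDensity_half_succ_neg (hn : n ≠ 0) : monomerDensity n (n / 2 + 1) < 0 := by
  refine div_neg_of_neg_of_pos (sub_neg.2 ?_) (by positivity)
  exact_mod_cast (by omega : n < 2 * (n / 2 + 1))

lemma monomerDensity_succ_add : monomerDensity n (d + 1) + 2 / n = monomerDensity n d := by
  rw [monomerDensity, monomerDensity, ← add_div]
  push_cast
  ring

lemma exists_abs_log_relWeight_add_le (hF : IsLaplaceMax (freeEnergy J h) m₀ κ a) :
    ∃ δ > 0, ∃ C ≥ 0, ∀ n d : ℕ, n ≠ 0 → |monomerDensity n d - m₀| < δ →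
      |log (relWeight J h m₀ n d) + n * (κ * (monomerDensity n d - m₀) ^ a)| ≤
        C * (n * |monomerDensity n d - m₀| ^ (a + 1) + |monomerDensity n d - m₀| + 1 / n) := by
  obtain ⟨C₁, hC₁, hev⟩ := hF.eventually_abs_add_mul_pow_le
  obtain ⟨δ₁, hδ₁, htaylor⟩ := Metric.eventually_nhds_iff.1 hev
  obtain ⟨δ₂, hδ₂, C₂, hstirling⟩ := exists_abs_log_relWeight_sub_le J h hF.mem_Ioo
  refine ⟨min δ₁ δ₂, lt_min hδ₁ hδ₂, C₁ + |C₂|, by positivity, fun n d hn hd => ?_⟩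
  set m := monomerDensity n d
  have htaylor_m := htaylor (hd.trans_le (min_le_left _ _))
  have hstirling_m := (hstirling n d hn (hd.trans_le (min_le_right _ _))).trans
    (mul_le_mul_of_nonneg_right (le_abs_self C₂) (by positivity))
  calc |log (relWeight J h m₀ n d) + n * (κ * (m - m₀) ^ a)|
      = |(log (relWeight J h m₀ n d) - n * (freeEnergy J h m - freeEnergy J h m₀)) +
          n * (freeEnergy J h m - freeEnergy J h m₀ + κ * (m - m₀) ^ a)| := by ring_nf
    _ ≤ |C₂| * (|m - m₀| + 1 / n) + n * (C₁ * |m - m₀| ^ (a + 1)) := by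
        refine (abs_add_le _ _).trans (add_le_add hstirling_m ?_)
        rw [abs_mul, Nat.abs_cast]
        gcongr
    _ ≤ _ := by
        have hmixed₁ : 0 ≤ |C₂| * (n * |m - m₀| ^ (a + 1)) := by positivity
        have hmixed₂ : 0 ≤ C₁ * (|m - m₀| + 1 / n) := by positivity
        linarith

lemma eventually_abs_log_relWeight_le (hF : IsLaplaceMax (freeEnergy J h) m₀ κ a)
    (ha0 : a ≠ 0) : ∃ C ≥ 0, ∀ᶠ Z in Filter.atTop, ∀ n d : ℕ, (n : ℝ) = Z ^ (a * (a + 1)) →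
      |Z ^ (a + 1) * (monomerDensity n d - m₀)| ≤ 2 * Z →
      |log (relWeight J h m₀ n d) + κ * (Z ^ (a + 1) * (monomerDensity n d - m₀)) ^ a| ≤
        C * (1 + |Z ^ (a + 1) * (monomerDensity n d - m₀)|) ^ (a + 1) / Z ^ (a + 1) := by
  obtain ⟨δ, hδ, C, hC, hlog⟩ := exists_abs_log_relWeight_add_le hF
  refine ⟨C * 2, by positivity, ?_⟩
  filter_upwards [Filter.eventually_ge_atTop 1, Filter.eventually_ge_atTop (2 / (δ / 2))]
    with Z hZ1 hZδ n d hn hd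
  set u := monomerDensity n d - m₀
  set ν := Z ^ (a + 1) with hν
  have hν1 : 1 ≤ ν := one_le_pow₀ hZ1
  have hνn : (n : ℝ) = ν ^ a := by rw [hn, hν, ← pow_mul, mul_comm]
  have hn0 : n ≠ 0 := by
    rintro rfl
    exact (pow_pos (zero_lt_one.trans_le hν1) a).ne (Nat.cast_zero.symm.trans hνn)
  have hνu : |ν * u| = ν * |u| := by rw [abs_mul, abs_of_pos (by linarith)]
  have hu : |u| < δ := by
    have hscale := hd.trans (two_mul_le_pow_succ_mul ha0 hZ1 (half_pos hδ) hZδ)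
    rw [hνu] at hscale
    exact (le_of_mul_le_mul_left hscale (by linarith)).trans_lt (half_lt_self hδ)
  calc |log (relWeight J h m₀ n d) + κ * (ν * u) ^ a|
      = |log (relWeight J h m₀ n d) + n * (κ * u ^ a)| := by
        rw [hνn, mul_pow, mul_left_comm]
    _ ≤ C * (ν ^ a * |u| ^ (a + 1) + |u| + 1 / ν ^ a) := by
        rw [← hνn]
        exact hlog n d hn0 hu
    _ ≤ C * (2 * (1 + ν * |u|) ^ (a + 1) / ν) :=
        mul_le_mul_of_nonneg_left (pow_mul_pow_succ_add_le ha0 hν1 (abs_nonneg u)) hC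
    _ = _ := by
        rw [hνu]
        ring

lemma eventually_relWeight_le (hF : IsLaplaceMax (freeEnergy J h) m₀ κ a) (ha : Even a)
    (ha0 : a ≠ 0) : ∀ᶠ Z in Filter.atTop, ∀ n d : ℕ, (n : ℝ) = Z ^ (a * (a + 1)) → 2 * d ≤ n →
      2 * Z < |Z ^ (a + 1) * (monomerDensity n d - m₀)| →
      relWeight J h m₀ n d ≤ exp 3 * n * exp (-(2 * κ * Z ^ a)) := by
  obtain ⟨c, hc, hgap⟩ := hF.exists_le_sub_min ha continuous_freeEnergy.continuousOn
  filter_upwards [Filter.eventually_ge_atTop 1, Filter.eventually_ge_atTop (2 * κ / c)]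
    with Z hZ1 hZc n d hn hd hfar
  have hn0 : (0 : ℝ) < n := by
    rw [hn]
    positivity
  have hgap_m := hgap _ (monomerDensity_mem_Icc hd)
  have hlog := log_relWeight_le (J := J) (h := h) hF.mem_Ioo (Nat.cast_pos.1 hn0).ne' hd
  set m := monomerDensity n d
  have hnear : 2 * κ * Z ^ a ≤ n * (κ / 2 * (m - m₀) ^ a) :=
    hn ▸ two_mul_mul_pow_le_of_two_mul_lt ha ha0 hF.coeff_pos.le (by linarith) hfar
  have hconst : 2 * κ * Z ^ a ≤ n * c := by
    rw [div_le_iff₀ hc] at hZc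
    calc 2 * κ * Z ^ a ≤ Z * c * Z ^ a := by gcongr
      _ = Z ^ (a + 1) * c := by ring
      _ ≤ n * c := by
        rw [hn]
        gcongr
        exact Nat.le_mul_of_pos_left _ (Nat.pos_of_ne_zero ha0)
  have hmin : 2 * κ * Z ^ a ≤ n * min (κ / 2 * (m - m₀) ^ a) c := by
    rw [mul_min_of_nonneg _ _ hn0.le]
    exact le_min hnear hconst
  have hle : log (relWeight J h m₀ n d) ≤ 3 + log n + -(2 * κ * Z ^ a) := by
    have hscaled := mul_le_mul_of_nonneg_left hgap_m hn0.le
    linarith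
  rw [log_le_iff_le_exp relWeight_pos, exp_add, exp_add, exp_log hn0] at hle
  exact hle

lemma eventually_mul_relWeight_le (hF : IsLaplaceMax (freeEnergy J h) m₀ κ a) (ha : Even a)
    (ha0 : a ≠ 0) : ∀ᶠ Z in Filter.atTop, ∀ n : ℕ, ∀ d < n / 2 + 1, (n : ℝ) = Z ^ (a * (a + 1)) →
      2 * Z < |Z ^ (a + 1) * (monomerDensity n d - m₀)| →
      2 * Z ^ (a + 1) / n * relWeight J h m₀ n d ≤
        4 * exp 3 * Z ^ ((a + 1) ^ 2) * exp (-(2 * κ * Z ^ a)) / (n / 2 + 1 : ℕ) := by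
  filter_upwards [eventually_relWeight_le hF ha ha0, Filter.eventually_gt_atTop 0]
    with Z hZ hZ0 n d hd hn hout
  have hn0 : (0 : ℝ) < n := by
    rw [hn]
    positivity
  have hcard : ((n / 2 + 1 : ℕ) : ℝ) ≤ 2 * n := by
    have hn_pos : 0 < n := Nat.cast_pos.1 hn0
    exact_mod_cast (by omega : n / 2 + 1 ≤ 2 * n)
  rw [le_div_iff₀ (by positivity)]
  calc 2 * Z ^ (a + 1) / n * relWeight J h m₀ n d * (n / 2 + 1 : ℕ)
      ≤ 2 * Z ^ (a + 1) / n * (exp 3 * n * exp (-(2 * κ * Z ^ a))) * (2 * n) := by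
        gcongr
        exact hZ n d hn (by omega) hout
    _ = 4 * exp 3 * (Z ^ (a + 1) * n) * exp (-(2 * κ * Z ^ a)) := by
        field_simp
        norm_num
    _ = 4 * exp 3 * Z ^ ((a + 1) ^ 2) * exp (-(2 * κ * Z ^ a)) := by
        rw [hn, ← pow_add]
        ring_nf

lemma exists_isLaplaceLattice (hF : IsLaplaceMax (freeEnergy J h) m₀ κ a) (ha : Even a)
    (ha0 : a ≠ 0) : ∃ C ≥ 0, ∀ᶠ Z in Filter.atTop, ∀ n : ℕ, (n : ℝ) = Z ^ (a * (a + 1)) →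
      IsLaplaceLattice κ C Z (2 * Z ^ (a + 1) / n) a ((a + 1) ^ 2) (n / 2 + 1)
        (fun d => Z ^ (a + 1) * (monomerDensity n d - m₀)) (relWeight J h m₀ n) := by
  obtain ⟨C, hC, hwindow⟩ := eventually_abs_log_relWeight_le hF ha0
  obtain ⟨hm0, hm1⟩ := hF.mem_Ioo
  refine ⟨max C (4 * exp 3), le_max_of_le_left hC, ?_⟩
  filter_upwards [hwindow, eventually_mul_relWeight_le hF ha ha0,
    Filter.eventually_ge_atTop 1, Filter.eventually_ge_atTop (2 / m₀),
    Filter.eventually_ge_atTop (2 / (1 - m₀))] with Z hwin hfar hZ1 hZm₀ hZm₁ n hn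
  have hν0 : 0 < Z ^ (a + 1) := by positivity
  have hn1 : (1 : ℝ) ≤ n := hn ▸ one_le_pow₀ hZ1
  have hn0 : (0 : ℝ) < n := by linarith
  refine
    { one_le_scale := hZ1
      spacing_pos := by positivity
      spacing_le := ?_
      node_succ := fun d => ?_
      window_le := ?_
      lt_window := ?_
      weight_pos := fun d => relWeight_pos
      abs_log_weight_le := fun d hd => (hwin n d hn hd).trans ?_
      weight_le := fun d hd hout => ?_ }
  · rw [div_le_div_iff₀ hn0 hν0, mul_assoc, hn, ← pow_add]
    gcongr
    have htwo : 2 ≤ a := Nat.le_of_dvd (Nat.pos_of_ne_zero ha0) ha.two_dvd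
    nlinarith
  · rw [← monomerDensity_succ_add (d := d)]
    ring
  · rw [monomerDensity_zero (Nat.cast_pos.1 hn0).ne']
    exact two_mul_le_pow_succ_mul ha0 hZ1 (by linarith) hZm₁
  · have hneg := monomerDensity_half_succ_neg (Nat.cast_pos.1 hn0).ne'
    have hscale := two_mul_le_pow_succ_mul ha0 hZ1 hm0 hZm₀
    nlinarith
  · gcongr
    exact le_max_left _ _
  · refine (hfar n d hd hn hout).trans ?_
    gcongr
    exact le_max_right _ _

end DimerLattice

/-! ### Tail probabilities of the monomer density -/

section MonomerTail

variable {J h m₀ κ : ℝ} {a : ℕ}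

lemma abs_div_sub_one_le {p q Q : ℝ} (hp : p ∈ Set.Icc 0 1) (hQ : 0 < Q) (hQq : Q ≤ q) :
    |p / q - 1| ≤ 1 / Q + 1 := by
  have hq : 0 < q := hQ.trans_le hQq
  have hle : p / q ≤ 1 / Q := div_le_div₀ zero_le_one hp.2 hQ hQq
  have hnonneg : 0 ≤ p / q := div_nonneg hp.1 hq.le
  have hQ0 : 0 < 1 / Q := by positivity
  exact abs_le.2 ⟨by linarith, by linarith⟩

lemma mdProb_eq_sum_relWeight_div (J h m₀ : ℝ) (n : ℕ) (P : ℝ → Prop) [DecidablePred P] :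
    mdProb J h n {σ | P (mdens σ)} =
      (∑ d ∈ Finset.range (n / 2 + 1) with P (monomerDensity n d), relWeight J h m₀ n d) /
        ∑ d ∈ Finset.range (n / 2 + 1), relWeight J h m₀ n d := by
  simp only [mdProb_eq_div, dimerWeight_eq_mul_relWeight (m₀ := m₀), ← Finset.mul_sum]
  exact mul_div_mul_left _ _ (exp_ne_zero _)

lemma eventually_abs_mdProb_div_sub_one_le (hF : IsLaplaceMax (freeEnergy J h) m₀ κ a)
    (ha : Even a) (ha0 : a ≠ 0) : ∃ K, ∀ᶠ Z in Filter.atTop, ∀ n : ℕ,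
      (n : ℝ) = Z ^ (a * (a + 1)) → ∀ z, 0 ≤ z → z ≤ Z →
      |mdProb J h n {σ | z ≤ Z ^ (a + 1) * (mdens σ - m₀)} /
          (expNegPowTail κ a z / ∫ y, expNegPow κ a y) - 1| ≤
        K * ((1 + z) ^ (a + 1) / Z ^ (a + 1)) := by
  obtain ⟨C, hC, hlattice⟩ := exists_isLaplaceLattice hF ha ha0
  obtain ⟨K, hratio⟩ :=
    IsLaplaceLattice.exists_abs_sum_div_sum_div_sub_one_le ha ha0 hF.coeff_pos hC ((a + 1) ^ 2)
  refine ⟨K, ?_⟩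
  filter_upwards [hlattice, hratio] with Z hZlat hZratio n hn z hz hzZ
  rw [mdProb_eq_sum_relWeight_div J h m₀ n fun m => z ≤ Z ^ (a + 1) * (m - m₀)]
  exact hZratio (hZlat n hn) hz hzZ

lemma exists_abs_mdProb_div_sub_one_le_of_eq_pow (hF : IsLaplaceMax (freeEnergy J h) m₀ κ a)
    (ha : Even a) (ha0 : a ≠ 0) : ∃ C > 0, ∀ (n : ℕ) (Z : ℝ), 1 ≤ Z →
      (n : ℝ) = Z ^ (a * (a + 1)) → ∀ z, 0 ≤ z → z ≤ Z →
      |mdProb J h n {σ | z ≤ Z ^ (a + 1) * (mdens σ - m₀)} /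
          (expNegPowTail κ a z / ∫ y, expNegPow κ a y) - 1| ≤
        C * (1 + z ^ (a + 1)) / Z ^ (a + 1) := by
  have hκ := hF.coeff_pos
  obtain ⟨K, hlarge⟩ := eventually_abs_mdProb_div_sub_one_le hF ha ha0
  obtain ⟨Z₀, hlarge⟩ := Filter.eventually_atTop.1 hlarge
  set I := ∫ y, expNegPow κ a y
  have hI : 0 < I := integral_expNegPow_pos ha ha0 hκ
  have hQ : 0 < expNegPowTail κ a Z₀ / I := div_pos (expNegPowTail_pos ha ha0 hκ) hI
  set B := (1 / (expNegPowTail κ a Z₀ / I) + 1) * |Z₀| ^ (a + 1)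
  have hB : 0 ≤ B := by positivity
  refine ⟨|K| * 2 ^ a + B + 1, by positivity, fun n Z hZ hn z hz hzZ => ?_⟩
  have hz1 : 1 ≤ 1 + z ^ (a + 1) := le_add_of_nonneg_right (by positivity)
  rw [le_div_iff₀ (by positivity)]
  rcases le_total Z₀ Z with hZ₀ | hZ₀
  · have hbound := hlarge Z hZ₀ n hn z hz hzZ
    rw [← mul_div_assoc, le_div_iff₀ (by positivity)] at hbound
    calc _ ≤ K * (1 + z) ^ (a + 1) := hbound
      _ ≤ |K| * (2 ^ a * (1 + z ^ (a + 1))) := by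
          have hadd := add_pow_le zero_le_one hz (a + 1)
          rw [one_pow, Nat.add_sub_cancel] at hadd
          exact mul_le_mul (le_abs_self K) hadd (by positivity) (abs_nonneg K)
      _ ≤ (|K| * 2 ^ a + B + 1) * (1 + z ^ (a + 1)) := by
          rw [← mul_assoc]
          gcongr
          linarith
  · have htrivial := abs_div_sub_one_le
      (p := mdProb J h n {σ | z ≤ Z ^ (a + 1) * (mdens σ - m₀)})
      ⟨mdProb_nonneg J h _, mdProb_le_one J h _⟩ hQ
      (div_le_div_of_nonneg_right (expNegPowTail_anti ha ha0 hκ (hzZ.trans hZ₀)) hI.le)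
    calc _ ≤ (1 / (expNegPowTail κ a Z₀ / I) + 1) * Z ^ (a + 1) := by gcongr
      _ ≤ B := by
          simp only [B]
          gcongr
          exact hZ₀.trans (le_abs_self _)
      _ ≤ (|K| * 2 ^ a + B + 1) * 1 := by linarith [show 0 ≤ |K| * 2 ^ a by positivity]
      _ ≤ (|K| * 2 ^ a + B + 1) * (1 + z ^ (a + 1)) := by gcongr

theorem exists_abs_mdProb_div_sub_one_le (hF : IsLaplaceMax (freeEnergy J h) m₀ κ a)
    (ha : Even a) (ha0 : a ≠ 0) : ∃ C > 0, ∀ n : ℕ, 1 ≤ n → ∀ z : ℝ, 0 ≤ z →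
      z ≤ (n : ℝ) ^ (1 / (a * (a + 1)) : ℝ) →
      |mdProb J h n {σ | z ≤ (n : ℝ) ^ (1 / a : ℝ) * (mdens σ - m₀)} /
          (expNegPowTail κ a z / ∫ y, expNegPow κ a y) - 1| ≤
        C * (n : ℝ) ^ (-1 / a : ℝ) * (1 + z ^ (a + 1)) := by
  obtain ⟨C, hC, hbound⟩ := exists_abs_mdProb_div_sub_one_le_of_eq_pow hF ha ha0
  refine ⟨C, hC, fun n hn z hz hzn => ?_⟩
  have hn1 : (1 : ℝ) ≤ n := Nat.one_le_cast.2 hn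
  have hn0 : (0 : ℝ) ≤ n := zero_le_one.trans hn1
  set Z := (n : ℝ) ^ (1 / (a * (a + 1)) : ℝ) with hZ
  have hZ1 : 1 ≤ Z := one_le_rpow hn1 (by positivity)
  have hZn : (n : ℝ) = Z ^ (a * (a + 1)) := by
    rw [hZ, ← rpow_natCast, ← rpow_mul hn0]
    push_cast
    rw [one_div_mul_cancel (by positivity), rpow_one]
  have hZpow : Z ^ (a + 1) = (n : ℝ) ^ (1 / a : ℝ) := by
    rw [hZ, ← rpow_natCast, ← rpow_mul hn0]
    push_cast
    field_simp
  have hratio := hbound n Z hZ1 hZn z hz hzn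
  rw [hZpow] at hratio
  refine hratio.trans_eq ?_
  rw [neg_div, rpow_neg hn0]
  ring

end MonomerTail

lemma gaussian_tail_eq {v z : ℝ} :
    ∫ y in Set.Ioi z, exp (-(y ^ 2) / (2 * v)) / √(2 * π * v) =
      expNegPowTail (2 * v)⁻¹ 2 z / ∫ y, expNegPow (2 * v)⁻¹ 2 y := by
  have hnorm : ∫ y, expNegPow (2 * v)⁻¹ 2 y = √(2 * π * v) := by
    simp only [expNegPow, ← neg_mul]
    rw [integral_gaussian]
    congr 1
    field_simp
  rw [hnorm, integral_div, expNegPowTail]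
  simp only [expNegPow]
  congr! 4
  ring

lemma const_mul_expNegPow_tail_eq {κ c z : ℝ} {a : ℕ} (hc : ∫ y, c * expNegPow κ a y = 1) :
    ∫ y in Set.Ici z, c * expNegPow κ a y = expNegPowTail κ a z / ∫ y, expNegPow κ a y := by
  rw [integral_const_mul] at hc
  rw [integral_Ici_eq_integral_Ioi, integral_const_mul, ← expNegPowTail,
    eq_div_iff (right_ne_zero_of_mul_eq_one hc), mul_right_comm, hc, one_mul]

theorem stmt_6 (J h : ℝ) (hJ : 0 ≤ J) :
    -- Case (i): `(J, h) ∉ Γ ∪ {(J_c, h_c)}`, i.e. `H` has a unique maximizer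
    -- `m₀ = g(τ(m₀))` with `H''(m₀) < 0`.
    (∀ m₀ : ℝ,
      (∀ x : ℝ, x ≠ m₀ → mdH J h x < mdH J h m₀) →
      m₀ = mdg (mdtau J h m₀) →
      iteratedDeriv 2 (mdH J h) m₀ < 0 →
      (J, h) ≠ (Jc, hcrit) →
      ∃ C : ℝ, 0 < C ∧ ∀ n : ℕ, 1 ≤ n → ∀ z : ℝ, 0 ≤ z → z ≤ (n : ℝ) ^ ((1 : ℝ) / 6) →
        |mdProb J h n {σ | z ≤ (n : ℝ) ^ ((1 : ℝ) / 2) * (mdens σ - m₀)} /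
            (∫ y in Set.Ioi z,
              Real.exp (-(y ^ 2) /
                  (2 * (-(iteratedDeriv 2 (mdH J h) m₀)⁻¹ - (2 * J)⁻¹))) /
                Real.sqrt (2 * Real.pi *
                  (-(iteratedDeriv 2 (mdH J h) m₀)⁻¹ - (2 * J)⁻¹))) - 1|
          ≤ C * (n : ℝ) ^ (-(1 : ℝ) / 2) * (1 + z ^ 3)) ∧
    -- Case (ii): `(J, h) = (J_c, h_c)`.
    (J = Jc → h = hcrit →
      ∀ c₁ : ℝ,
        (∫ y : ℝ,
          c₁ * Real.exp (-(-(iteratedDeriv 4 (mdH J h) (2 - Real.sqrt 2)) * y ^ 4) / 24)) = 1 →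
        ∃ C : ℝ, 0 < C ∧ ∀ n : ℕ, 1 ≤ n → ∀ z : ℝ, 0 ≤ z → z ≤ (n : ℝ) ^ ((1 : ℝ) / 20) →
          |mdProb J h n {σ | z ≤ (n : ℝ) ^ ((1 : ℝ) / 4) * (mdens σ - (2 - Real.sqrt 2))} /
              (∫ y in Set.Ici z,
                c₁ * Real.exp (-(-(iteratedDeriv 4 (mdH J h) (2 - Real.sqrt 2)) * y ^ 4) / 24))
            - 1|
            ≤ C * (n : ℝ) ^ (-(1 : ℝ) / 4) * (1 + z ^ 5)) := by
  refine ⟨fun m₀ hmax hfix h2 _ => ?_, ?_⟩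
  · obtain ⟨C, hC, hbound⟩ := exists_abs_mdProb_div_sub_one_le
      (isLaplaceMax_freeEnergy hJ hmax hfix h2) even_two two_ne_zero
    refine ⟨C, hC, fun n hn z hz hzn => ?_⟩
    rw [neg_inv_sub_inv_eq hJ hfix h2, gaussian_tail_eq, mul_inv, inv_inv, inv_mul_eq_div]
    simpa using hbound n hn z hz (hzn.trans_eq (by norm_num))
  · rintro rfl rfl c₁ hc₁
    obtain ⟨C, hC, hbound⟩ := exists_abs_mdProb_div_sub_one_le
      isLaplaceMax_freeEnergy_crit (by decide) four_ne_zero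
    have hdensity (y : ℝ) : exp (-(-(iteratedDeriv 4 (mdH Jc hcrit) (2 - √2)) * y ^ 4) / 24) =
        expNegPow (-(iteratedDeriv 4 (mdH Jc hcrit) (2 - √2)) / 24) 4 y := by
      rw [expNegPow, neg_div, mul_div_right_comm]
    simp only [hdensity] at hc₁ ⊢
    refine ⟨C, hC, fun n hn z hz hzn => ?_⟩
    rw [const_mul_expNegPow_tail_eq hc₁]
    simpa using hbound n hn z hz (hzn.trans_eq (by norm_num))
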